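/- If X ⊆ 𝒜^∞ is a d̄_M-stable shift space, then its measure center X^+ is transitive and the ergodic measures are entropy dense in M_σ(X). -/

import Mathlib

open MeasureTheory Filter Topology

namespace DbarPaper

variable {A : Type} [Fintype A] [DecidableEq A] [Inhabited A]
  [TopologicalSpace A] [DiscreteTopology A]
  [MeasurableSpace A] [MeasurableSingletonClass A]

/-- The shift map on the full shift `𝒜^∞ = ℕ → A`. -/
def shift : (ℕ → A) → (ℕ → A) := fun x n => x (n + 1)

/-- A shift space: a nonempty, closed, shift-invariant subset of the full shift. -/
def ShiftSpace (X : Set (ℕ → A)) : Prop :=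
  X.Nonempty ∧ IsClosed X ∧ ∀ x ∈ X, shift x ∈ X

/-- The word `w` appears in the sequence `x`. -/
def occursIn (w : List A) (x : ℕ → A) : Prop :=
  ∃ i : ℕ, w = List.ofFn (fun k : Fin w.length => x (i + (k : ℕ)))

/-- The language of a set `X`: all finite words appearing in points of `X`. -/
def lang (X : Set (ℕ → A)) : Set (List A) := {w | ∃ x ∈ X, occursIn w x}

/-- Words of length `n` in the language of `X`. -/
def langN (n : ℕ) (X : Set (ℕ → A)) : Set (List A) := {w | w ∈ lang X ∧ w.length = n}

/-- The pseudometric `d̄` on the full shift. -/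
noncomputable def dbar (x y : ℕ → A) : ℝ :=
  Filter.limsup
    (fun n => (((Finset.range n).filter (fun j => x j ≠ y j)).card : ℝ) / (n : ℝ))
    Filter.atTop

/-- Hausdorff "distance" between two sets induced by a `ℝ`-valued distance. -/
noncomputable def hausdist {Z : Type*} (d : Z → Z → ℝ) (P Q : Set Z) : ℝ :=
  max (⨆ p : P, ⨅ q : Q, d p q) (⨆ q : Q, ⨅ p : P, d p q)

/-- A probability measure is shift-invariant. -/
def invariantPM (μ : ProbabilityMeasure (ℕ → A)) : Prop :=
  (μ : Measure (ℕ → A)).map shift = (μ : Measure (ℕ → A))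

/-- `M_σ(X)`: shift-invariant Borel probability measures giving `X` full measure. -/
def Msigma (X : Set (ℕ → A)) : Set (ProbabilityMeasure (ℕ → A)) :=
  {μ | invariantPM μ ∧ μ X = 1}

/-- `ξ` is a joining of `μ` and `ν`: a `σ×σ`-invariant measure on the product with
marginals `μ` and `ν`. -/
def IsJoining (ξ : Measure ((ℕ → A) × (ℕ → A))) (μ ν : ProbabilityMeasure (ℕ → A)) : Prop :=
  ξ.map (Prod.map shift shift) = ξ ∧
  ξ.map Prod.fst = (μ : Measure (ℕ → A)) ∧ ξ.map Prod.snd = (ν : Measure (ℕ → A))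

/-- Ornstein's metric `d̄_M` on invariant measures. -/
noncomputable def dbarM (μ ν : ProbabilityMeasure (ℕ → A)) : ℝ :=
  sInf {r : ℝ | ∃ ξ : Measure ((ℕ → A) × (ℕ → A)),
    IsJoining ξ μ ν ∧ r = (ξ {p | p.1 0 ≠ p.2 0}).toReal}

/-- `d̄_M`-stability of a shift space (Austin). -/
def DbarMStable (X : Set (ℕ → A)) : Prop :=
  ∀ ε : ℝ, 0 < ε → ∃ U : Set (ProbabilityMeasure (ℕ → A)), IsOpen U ∧ Msigma X ⊆ U ∧
    ∀ ν ∈ U, invariantPM ν → ∃ μ ∈ Msigma X, dbarM μ ν < ε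

/-- The infinite concatenation of a sequence of (nonempty) words. -/
def concatSeq (w : ℕ → List A) : ℕ → A := fun n =>
  ((List.ofFn (fun i : Fin (n + 1) => w (i : ℕ))).flatten).getD n default

/-- The `d̄`-shadowing property. -/
def DbarShadowing (X : Set (ℕ → A)) : Prop :=
  ∀ ε : ℝ, 0 < ε → ∃ N : ℕ, 0 < N ∧ ∀ w : ℕ → List A,
    (∀ j, w j ∈ lang X) → (∀ j, N ≤ (w j).length) →
    ∃ x' ∈ X, dbar (concatSeq w) x' < ε

/-- `U_n(X)`: the union of cylinders of words of length `n` in the language of `X`. -/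
def cylNbhd (X : Set (ℕ → A)) (n : ℕ) : Set (ℕ → A) :=
  {x | List.ofFn (fun k : Fin n => x (k : ℕ)) ∈ lang X}

/-- The `n`-th (topological) Markov approximation of `X`: all sequences whose subwords of
length `n+1` belong to the language of `X`. -/
def markovApprox (X : Set (ℕ → A)) (n : ℕ) : Set (ℕ → A) :=
  {x | ∀ i : ℕ, List.ofFn (fun k : Fin (n + 1) => x (i + (k : ℕ))) ∈ lang X}

/-- Transitivity, in terms of the language. -/
def TransitiveShift (X : Set (ℕ → A)) : Prop :=
  ∀ u ∈ lang X, ∀ w ∈ lang X, ∃ v : List A, u ++ v ++ w ∈ lang X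

/-- Topological mixing, in terms of the language. -/
def MixingShift (X : Set (ℕ → A)) : Prop :=
  ∀ u ∈ lang X, ∀ w ∈ lang X, ∃ N : ℕ, ∀ m : ℕ, N ≤ m →
    ∃ v : List A, v.length = m ∧ u ++ v ++ w ∈ lang X

/-- Chain mixing: all but finitely many Markov approximations are topologically mixing. -/
def ChainMixing (X : Set (ℕ → A)) : Prop :=
  ∃ N : ℕ, ∀ n : ℕ, N ≤ n → MixingShift (markovApprox X n)

/-- `C` is the measure center of `X`: the smallest shift space contained in `X` of full
measure for every invariant measure of `X`. -/
def IsMeasureCenter (X C : Set (ℕ → A)) : Prop :=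
  ShiftSpace C ∧ C ⊆ X ∧ (∀ μ ∈ Msigma X, μ C = 1) ∧
  ∀ Y : Set (ℕ → A), ShiftSpace Y → Y ⊆ X → (∀ μ ∈ Msigma X, μ Y = 1) → C ⊆ Y

/-- Measure of the cylinder determined by a word of length `n`. -/
noncomputable def cylMeasure (μ : ProbabilityMeasure (ℕ → A)) {n : ℕ} (w : Fin n → A) : ℝ :=
  ((μ : Measure (ℕ → A)) {x | ∀ k : Fin n, x (k : ℕ) = w k}).toReal

/-- Entropy of the partition into cylinders of length `n`. -/
noncomputable def blockEntropy (μ : ProbabilityMeasure (ℕ → A)) (n : ℕ) : ℝ :=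
  -∑ w : Fin n → A, cylMeasure μ w * Real.log (cylMeasure μ w)

/-- Kolmogorov–Sinai entropy of a shift-invariant measure. -/
noncomputable def ksEntropy (μ : ProbabilityMeasure (ℕ → A)) : ℝ :=
  Filter.limsup (fun n => blockEntropy μ n / (n : ℝ)) Filter.atTop

/-- `μ` is ergodic for the shift. -/
def ErgodicPM (μ : ProbabilityMeasure (ℕ → A)) : Prop :=
  Ergodic shift (μ : Measure (ℕ → A))

/-- Ergodic measures are entropy dense in `M_σ(X)`. -/
def EntropyDense (X : Set (ℕ → A)) : Prop :=
  ∀ μ ∈ Msigma X, ∀ U : Set (ProbabilityMeasure (ℕ → A)), IsOpen U → μ ∈ U →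
    ∀ ε : ℝ, 0 < ε →
      ∃ ν ∈ Msigma X, ν ∈ U ∧ ErgodicPM ν ∧ |ksEntropy ν - ksEntropy μ| < ε

/-- Topological entropy of a shift space. -/
noncomputable def topEntropy (X : Set (ℕ → A)) : ℝ :=
  Filter.limsup (fun n => Real.log (Nat.card ↥(langN n X)) / (n : ℝ)) Filter.atTop

/-- The standard metric on the full shift. -/
noncomputable def rho (x y : ℕ → A) : ℝ :=
  open scoped Classical in
  if x = y then 0 else (2 : ℝ) ^ (-((sInf {j : ℕ | x j ≠ y j} : ℕ) : ℤ))

/-- Proximality of a shift space. -/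
def ProximalShift (X : Set (ℕ → A)) : Prop :=
  ∀ x ∈ X, ∀ y ∈ X,
    Filter.liminf (fun n => rho (shift^[n] x) (shift^[n] y)) Filter.atTop = 0

/-- Minimality of a shift space. -/
def MinimalShift (X : Set (ℕ → A)) : Prop :=
  ShiftSpace X ∧ ∀ Y : Set (ℕ → A), ShiftSpace Y → Y ⊆ X → Y = X

/-- An `A`-labeled directed multigraph on vertices `V` with edges `E`. -/
structure LabeledGraph (A V E : Type*) where
  src : E → V
  dst : E → V
  lab : E → A

namespace LabeledGraph

variable {A' V E : Type*}

/-- `es` is a path in `G` from `u` to `v`. -/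
def PathFromTo (G : LabeledGraph A' V E) (es : List E) (u v : V) : Prop :=
  es.Chain' (fun e f => G.dst e = G.src f) ∧
  es.head?.map G.src = some u ∧ es.getLast?.map G.dst = some v

/-- `G` is strongly connected. -/
def StronglyConnected (G : LabeledGraph A' V E) : Prop :=
  ∀ u v : V, ∃ es : List E, G.PathFromTo es u v

/-- `d` is the period of `G`: the gcd of lengths of closed paths. -/
def HasPeriod (G : LabeledGraph A' V E) (d : ℕ) : Prop :=
  (∀ (es : List E) (u : V), G.PathFromTo es u u → d ∣ es.length) ∧
  ∀ d' : ℕ, (∀ (es : List E) (u : V), G.PathFromTo es u u → d' ∣ es.length) → d' ∣ d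

/-- `b` is a safe symbol for `G`. -/
def SafeSymbol (G : LabeledGraph A' V E) (b : A') : Prop :=
  ∀ e : E, ∃ e' : E, G.src e' = G.src e ∧ G.dst e' = G.dst e ∧ G.lab e' = b

/-- The shift space presented by the labeled graph `G`: labels read along infinite paths. -/
def presents (G : LabeledGraph A' V E) : Set (ℕ → A') :=
  {x | ∃ e : ℕ → E, (∀ j, G.dst (e j) = G.src (e (j + 1))) ∧ ∀ j, x j = G.lab (e j)}

end LabeledGraph

/-- The coupling of a family of labeled graphs: an edge labeled `a` from `v` to `v'` exists
iff each `G k` has an edge from `v k` to `v' k` labeled `a`. -/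
def coupling {A' : Type*} {n : ℕ} {V E : Fin n → Type*}
    (G : ∀ k, LabeledGraph A' (V k) (E k)) :
    LabeledGraph A' (∀ k, V k) {p : (∀ k, E k) × A' // ∀ k, (G k).lab (p.1 k) = p.2} where
  src p := fun k => (G k).src (p.1.1 k)
  dst p := fun k => (G k).dst (p.1.1 k)
  lab p := p.1.2

/-- Sofic shift spaces: those presented by some finite labeled graph. -/
def Sofic (X : Set (ℕ → A)) : Prop :=
  ∃ (V E : Type) (_ : Fintype V) (_ : Fintype E) (G : LabeledGraph A V E),
    X = G.presents

/-- The coded shift generated by a finite set of words `B`: the closure of the set of all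
shifts of infinite concatenations of words from `B`. -/
def codedShift (B : Finset (List A)) : Set (ℕ → A) :=
  closure {x | ∃ (b : ℕ → List A) (k : ℕ), (∀ i, b i ∈ B) ∧ x = shift^[k] (concatSeq b)}

set_option linter.unusedSectionVars false

section Shannon

open Real

variable {Ω S T : Type*} [MeasurableSpace Ω] [Fintype S] [Fintype T]

/-- Shannon entropy of a finite-valued random variable. -/
noncomputable def shannon (P : Measure Ω) (Z : Ω → S) : ℝ :=
  ∑ s, negMulLog (P.real (Z ⁻¹' {s}))

/-- All fibers of `Z` are measurable. -/
def MeasurableFibers (Z : Ω → S) : Prop := ∀ s, MeasurableSet (Z ⁻¹' {s})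

lemma negMulLog_sum_le {ι : Type*} (s : Finset ι) (p : ι → ℝ) (hp : ∀ i ∈ s, 0 ≤ p i) :
    negMulLog (∑ i ∈ s, p i) ≤ ∑ i ∈ s, negMulLog (p i) := by
  have h : ∑ i ∈ s, p i * log (p i) ≤ ∑ i ∈ s, p i * log (∑ j ∈ s, p j) := by
    refine Finset.sum_le_sum fun i hi => ?_
    rcases (hp i hi).eq_or_lt with h0 | h0
    · simp [← h0]
    · exact mul_le_mul_of_nonneg_left
        (log_le_log h0 (Finset.single_le_sum hp hi)) h0.le
  rw [← Finset.sum_mul] at h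
  simp only [negMulLog, neg_mul, Finset.sum_neg_distrib]
  linarith

lemma measureReal_preimage_eq_sum (P : Measure Ω) [IsFiniteMeasure P] {Z : Ω → S}
    (hZ : MeasurableFibers Z) (t : Finset S) :
    P.real (Z ⁻¹' (t : Set S)) = ∑ s ∈ t, P.real (Z ⁻¹' {s}) :=
  (sum_measureReal_preimage_singleton t (fun s _ => hZ s)).symm

lemma MeasurableFibers.preimage {Z : Ω → S} (hZ : MeasurableFibers Z) (t : Set S) :
    MeasurableSet (Z ⁻¹' t) := by
  rw [← Set.biUnion_preimage_singleton]
  exact MeasurableSet.biUnion t.to_countable fun s _ => hZ s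

lemma MeasurableFibers.comp {Z : Ω → S} (hZ : MeasurableFibers Z) (f : S → T) :
    MeasurableFibers (fun ω => f (Z ω)) := fun t => hZ.preimage (f ⁻¹' {t})

lemma MeasurableFibers.prodMk {Z : Ω → S} {W : Ω → T} (hZ : MeasurableFibers Z)
    (hW : MeasurableFibers W) : MeasurableFibers (fun ω => (Z ω, W ω)) := by
  rintro ⟨s, t⟩
  have : (fun ω => (Z ω, W ω)) ⁻¹' {(s, t)} = Z ⁻¹' {s} ∩ W ⁻¹' {t} := by
    ext ω; simp
  rw [this]
  exact (hZ s).inter (hW t)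

lemma MeasurableFibers.pi {k : ℕ} {Z : Fin k → Ω → S} (hZ : ∀ i, MeasurableFibers (Z i)) :
    MeasurableFibers (fun ω i => Z i ω) := by
  intro w
  have : (fun ω i => Z i ω) ⁻¹' {w} = ⋂ i, Z i ⁻¹' {w i} := by
    ext ω; simp [funext_iff]
  rw [this]
  exact MeasurableSet.iInter fun i => hZ i (w i)

lemma MeasurableFibers.of_measurable [MeasurableSpace S] [MeasurableSingletonClass S]
    {Z : Ω → S} (hZ : Measurable Z) : MeasurableFibers Z :=
  fun s => hZ (measurableSet_singleton s)

lemma shannon_nonneg (P : Measure Ω) [IsProbabilityMeasure P] (Z : Ω → S) : 0 ≤ shannon P Z :=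
  Finset.sum_nonneg fun _ _ => negMulLog_nonneg measureReal_nonneg measureReal_le_one

lemma shannon_comp_le (P : Measure Ω) [IsFiniteMeasure P] {Z : Ω → S}
    (hZ : MeasurableFibers Z) (f : S → T) : shannon P (fun ω => f (Z ω)) ≤ shannon P Z := by
  classical
  unfold shannon
  rw [← Finset.sum_fiberwise Finset.univ f]
  refine Finset.sum_le_sum fun t _ => ?_
  have : (fun ω => f (Z ω)) ⁻¹' {t} = Z ⁻¹' ((Finset.univ.filter fun s => f s = t : Finset S) : Set S) := by
    ext ω; simp
  rw [this, measureReal_preimage_eq_sum P hZ]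
  exact negMulLog_sum_le _ _ fun _ _ => measureReal_nonneg

lemma measureReal_fst_eq_sum (P : Measure Ω) [IsFiniteMeasure P] {Z : Ω → S} {W : Ω → T}
    (hZ : MeasurableFibers Z) (hW : MeasurableFibers W) (s : S) :
    P.real (Z ⁻¹' {s}) = ∑ t, P.real ((fun ω => (Z ω, W ω)) ⁻¹' {(s, t)}) := by
  classical
  have : Z ⁻¹' {s} = (fun ω => (Z ω, W ω)) ⁻¹'
      ((({s} : Finset S) ×ˢ (Finset.univ : Finset T) : Finset (S × T)) : Set (S × T)) := by
    ext ω; simp [eq_comm]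
  rw [this, measureReal_preimage_eq_sum P (hZ.prodMk hW), Finset.sum_product]
  simp

lemma measureReal_snd_eq_sum (P : Measure Ω) [IsFiniteMeasure P] {Z : Ω → S} {W : Ω → T}
    (hZ : MeasurableFibers Z) (hW : MeasurableFibers W) (t : T) :
    P.real (W ⁻¹' {t}) = ∑ s, P.real ((fun ω => (Z ω, W ω)) ⁻¹' {(s, t)}) := by
  classical
  have : W ⁻¹' {t} = (fun ω => (Z ω, W ω)) ⁻¹'
      (((Finset.univ : Finset S) ×ˢ ({t} : Finset T) : Finset (S × T)) : Set (S × T)) := by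
    ext ω; simp [eq_comm]
  rw [this, measureReal_preimage_eq_sum P (hZ.prodMk hW), Finset.sum_product]
  simp

lemma sum_measureReal_fibers (P : Measure Ω) [IsProbabilityMeasure P] {Z : Ω → S}
    (hZ : MeasurableFibers Z) : ∑ s, P.real (Z ⁻¹' {s}) = 1 := by
  rw [← measureReal_preimage_eq_sum P hZ]
  simp

lemma shannon_prodMk_le (P : Measure Ω) [IsProbabilityMeasure P] {Z : Ω → S} {W : Ω → T}
    (hZ : MeasurableFibers Z) (hW : MeasurableFibers W) :
    shannon P (fun ω => (Z ω, W ω)) ≤ shannon P Z + shannon P W := by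
  set p : S → T → ℝ := fun s t => P.real ((fun ω => (Z ω, W ω)) ⁻¹' {(s, t)}) with hp
  set a : S → ℝ := fun s => P.real (Z ⁻¹' {s}) with ha
  set b : T → ℝ := fun t => P.real (W ⁻¹' {t}) with hb
  have ha' : ∀ s, a s = ∑ t, p s t := measureReal_fst_eq_sum P hZ hW
  have hb' : ∀ t, b t = ∑ s, p s t := measureReal_snd_eq_sum P hZ hW
  have hp0 : ∀ s t, 0 ≤ p s t := fun s t => measureReal_nonneg
  have key : ∀ s t, negMulLog (p s t) + p s t * log (a s) + p s t * log (b t)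
      ≤ a s * b t - p s t := by
    intro s t
    have hpa : p s t ≤ a s := by
      rw [ha']; exact Finset.single_le_sum (fun t _ => hp0 s t) (Finset.mem_univ t)
    have hpb : p s t ≤ b t := by
      rw [hb']; exact Finset.single_le_sum (fun s _ => hp0 s t) (Finset.mem_univ s)
    rcases (hp0 s t).eq_or_lt with h0 | h0
    · rw [← h0] at hpa hpb ⊢
      simpa using mul_nonneg hpa hpb
    · have h1 := log_le_sub_one_of_pos (div_pos (mul_pos (h0.trans_le hpa) (h0.trans_le hpb)) h0)
      rw [log_div (mul_pos (h0.trans_le hpa) (h0.trans_le hpb)).ne' h0.ne',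
        log_mul (h0.trans_le hpa).ne' (h0.trans_le hpb).ne'] at h1
      have h2 := mul_le_mul_of_nonneg_left h1 h0.le
      have h3 : p s t * (a s * b t / p s t - 1) = a s * b t - p s t := by field_simp
      rw [h3] at h2
      simp only [negMulLog]
      linarith
  have hsum := Finset.sum_le_sum fun s (_ : s ∈ Finset.univ) =>
    Finset.sum_le_sum fun t (_ : t ∈ Finset.univ) => key s t
  simp only [Finset.sum_add_distrib, Finset.sum_sub_distrib] at hsum
  have h1 : ∑ s, ∑ t, p s t * log (a s) = - shannon P Z := by
    simp only [← Finset.sum_mul, ← ha', shannon, negMulLog, neg_mul, Finset.sum_neg_distrib, neg_neg]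
    rfl
  have h2 : ∑ s, ∑ t, p s t * log (b t) = - shannon P W := by
    rw [Finset.sum_comm]
    simp only [← Finset.sum_mul, ← hb', shannon, negMulLog, neg_mul, Finset.sum_neg_distrib, neg_neg]
    rfl
  have h3 : ∑ s, ∑ t, a s * b t = 1 := by
    rw [← Finset.sum_mul_sum, sum_measureReal_fibers P hZ, sum_measureReal_fibers P hW, one_mul]
  have h4 : ∑ s, ∑ t, p s t = 1 := by
    simp only [← ha']; exact sum_measureReal_fibers P hZ
  have h5 : shannon P (fun ω => (Z ω, W ω)) = ∑ s, ∑ t, negMulLog (p s t) := by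
    rw [shannon, Fintype.sum_prod_type]
  rw [h5]
  linarith

lemma shannon_prodMk_of_indep (P : Measure Ω) [IsProbabilityMeasure P] {Z : Ω → S} {W : Ω → T}
    (hZ : MeasurableFibers Z) (hW : MeasurableFibers W)
    (h : ∀ s t, P (Z ⁻¹' {s} ∩ W ⁻¹' {t}) = P (Z ⁻¹' {s}) * P (W ⁻¹' {t})) :
    shannon P (fun ω => (Z ω, W ω)) = shannon P Z + shannon P W := by
  have hp : ∀ s t, P.real ((fun ω => (Z ω, W ω)) ⁻¹' {(s, t)})
      = P.real (Z ⁻¹' {s}) * P.real (W ⁻¹' {t}) := by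
    intro s t
    have : (fun ω => (Z ω, W ω)) ⁻¹' {(s, t)} = Z ⁻¹' {s} ∩ W ⁻¹' {t} := by ext ω; simp
    rw [this, measureReal_def, h, ENNReal.toReal_mul]; rfl
  unfold shannon
  rw [Fintype.sum_prod_type]
  simp only [hp, negMulLog_mul, Finset.sum_add_distrib]
  congr 1
  · simp only [← Finset.sum_mul, sum_measureReal_fibers P hW, one_mul]
  · rw [← Finset.sum_mul_sum, sum_measureReal_fibers P hZ, one_mul]

lemma shannon_pi_le (P : Measure Ω) [IsProbabilityMeasure P] {k : ℕ} {Z : Fin k → Ω → S}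
    (hZ : ∀ i, MeasurableFibers (Z i)) :
    shannon P (fun ω i => Z i ω) ≤ ∑ i, shannon P (Z i) := by
  induction k with
  | zero =>
    simp only [shannon, Finset.univ_eq_empty, Finset.sum_empty]
    rw [Fintype.sum_subsingleton _ (default : Fin 0 → S)]
    have : (fun ω (i : Fin 0) => Z i ω) ⁻¹' {default} = Set.univ := by
      ext ω; simp [eq_iff_true_of_subsingleton]
    simp [this]
  | succ k ih =>
    rw [Fin.sum_univ_succ]
    have h1 := shannon_comp_le P ((hZ 0).prodMk (MeasurableFibers.pi fun i => hZ (Fin.succ i)))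
      (fun q : S × (Fin k → S) => (Fin.cons q.1 q.2 : Fin (k + 1) → S))
    have h2 : (fun ω => (Fin.cons (Z 0 ω) (fun i : Fin k => Z i.succ ω) : Fin (k + 1) → S))
        = fun ω i => Z i ω := by
      ext ω i
      refine Fin.cases ?_ (fun j => ?_) i <;> simp
    simp only [h2] at h1
    have h3 := shannon_prodMk_le P (hZ 0) (MeasurableFibers.pi fun i => hZ (Fin.succ i))
    have h4 := ih (Z := fun i => Z i.succ) fun i => hZ i.succ
    linarith

lemma sum_shannon_le_shannon_pi (P : Measure Ω) [IsProbabilityMeasure P]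
    [MeasurableSpace S] [MeasurableSingletonClass S] {Z : ℕ → Ω → S} (hZ : ∀ i, Measurable (Z i))
    (hind : ProbabilityTheory.iIndepFun Z P) (k : ℕ) :
    ∑ i ∈ Finset.range k, shannon P (Z i) ≤ shannon P (fun ω (i : Fin k) => Z i ω) := by
  induction k with
  | zero => simpa using shannon_nonneg P _
  | succ k ih =>
    have hf : ∀ i, MeasurableFibers (Z i) := fun i => .of_measurable (hZ i)
    rw [Finset.sum_range_succ]
    have h1 := shannon_comp_le P (MeasurableFibers.pi fun i : Fin (k + 1) => hf i)
      (fun w : Fin (k + 1) → S => ((fun i : Fin k => w i.castSucc), w (Fin.last k)))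
    have h3 := (hind.indepFun_finset (Finset.range k) {k} (by simp) hZ)
    have h2 := shannon_prodMk_of_indep P (MeasurableFibers.pi fun i : Fin k => hf i) (hf k) (by
      intro w s
      have h4 := h3.measure_inter_preimage_eq_mul {v | ∀ i : Fin k, v ⟨i, by simp⟩ = w i}
        {v | v ⟨k, by simp⟩ = s} ?_ ?_
      · have e1 : (fun ω (i : Fin k) => Z i ω) ⁻¹' {w} =
            (fun a (i : Finset.range k) => Z i a) ⁻¹' {v | ∀ i : Fin k, v ⟨i, by simp⟩ = w i} := by
          ext ω; simp [funext_iff]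
        rw [e1]
        exact h4
      · have : {v : Finset.range k → S | ∀ i : Fin k, v ⟨i, by simp⟩ = w i}
          = ⋂ i : Fin k, (fun v => v ⟨i, by simp⟩) ⁻¹' {w i} := by ext; simp
        rw [this]
        exact MeasurableSet.iInter fun i => measurable_pi_apply _ (measurableSet_singleton _)
      · have e2 : Measurable fun v : ({k} : Finset ℕ) → S => v ⟨k, by simp⟩ := measurable_pi_apply _
        exact e2 (measurableSet_singleton s))
    simp only [Fin.val_castSucc, Fin.val_last] at h1
    linarith

lemma shannon_map {Ω' : Type*} [MeasurableSpace Ω'] (P : Measure Ω) {Φ : Ω → Ω'}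
    (hΦ : Measurable Φ) {Z : Ω' → S} (hZ : MeasurableFibers Z) :
    shannon (P.map Φ) Z = shannon P (fun ω => Z (Φ ω)) := by
  unfold shannon
  refine Finset.sum_congr rfl fun s _ => ?_
  rw [map_measureReal_apply hΦ (hZ s)]
  rfl

end Shannon

lemma measurable_shift : Measurable (shift : (ℕ → A) → (ℕ → A)) :=
  measurable_pi_iff.2 fun n => measurable_pi_apply (n + 1)

lemma continuous_shift : Continuous (shift : (ℕ → A) → (ℕ → A)) :=
  continuous_pi fun n => continuous_apply (n + 1)

lemma shift_iterate_apply (x : ℕ → A) (i j : ℕ) : shift^[i] x j = x (i + j) := by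
  induction i generalizing x with
  | zero => simp
  | succ i ih => rw [Function.iterate_succ_apply, ih]; simp [shift]; congr 1; omega

/-- The cylinder of sequences starting with `w`. -/
def cyl {k : ℕ} (w : Fin k → A) : Set (ℕ → A) := {x | ∀ i : Fin k, x i = w i}

lemma cyl_eq_iInter {k : ℕ} (w : Fin k → A) :
    cyl w = ⋂ i : Fin k, (fun x : ℕ → A => x i) ⁻¹' {w i} := by
  ext; simp [cyl]

lemma measurableSet_cyl {k : ℕ} (w : Fin k → A) : MeasurableSet (cyl w) := by
  rw [cyl_eq_iInter]
  exact MeasurableSet.iInter fun i => measurable_pi_apply _ (measurableSet_singleton _)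

lemma isClopen_cyl {k : ℕ} (w : Fin k → A) : IsClopen (cyl w) := by
  rw [cyl_eq_iInter]
  exact isClopen_iInter_of_finite fun i => (isClopen_discrete _).preimage (continuous_apply _)

/-- The first `m` symbols of a sequence. -/
def window (m : ℕ) (x : ℕ → A) : Fin m → A := fun k => x k

lemma measurable_window (m : ℕ) : Measurable (window m : (ℕ → A) → _) :=
  measurable_pi_iff.2 fun _ => measurable_pi_apply _

lemma window_preimage {m : ℕ} (w : Fin m → A) : window m ⁻¹' {w} = cyl w := by
  ext x; simp [window, cyl, funext_iff]

lemma blockEntropy_eq (μ : ProbabilityMeasure (ℕ → A)) (m : ℕ) :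
    blockEntropy μ m = shannon (μ : Measure (ℕ → A)) (window m) := by
  simp only [blockEntropy, shannon, Real.negMulLog, neg_mul, Finset.sum_neg_distrib,
    window_preimage]
  rfl

section Block

open scoped ENNReal

variable (μ : Measure (ℕ → A)) (n : ℕ)

/-- The law of independent blocks of length `n`, each distributed as the first `n` symbols
under `μ`. -/
noncomputable def blocksLaw : Measure (ℕ → Fin n → A) :=
  Measure.infinitePi fun _ => μ.map (window n)

/-- `blocksLaw` together with an independent uniform phase. -/
noncomputable def phasedLaw : Measure ((ℕ → Fin n → A) × Fin n) :=
  (n : ℝ≥0∞)⁻¹ • ∑ i : Fin n, (blocksLaw μ n).map fun ω => (ω, i)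

variable {n}

/-- Concatenate the blocks of `ω` and drop the first `i` symbols. -/
def unblock [NeZero n] (i : ℕ) (ω : ℕ → Fin n → A) : ℕ → A :=
  fun m => ω ((i + m) / n) (Fin.ofNat n (i + m))

lemma measurable_unblock [NeZero n] (i : ℕ) :
    Measurable (unblock i : (ℕ → Fin n → A) → (ℕ → A)) :=
  measurable_pi_iff.2 fun m => (measurable_pi_apply (Fin.ofNat n (i + m))).comp
    (measurable_pi_apply ((i + m) / n))

lemma shift_unblock [NeZero n] (i : ℕ) (ω : ℕ → Fin n → A) :
    shift (unblock i ω) = unblock (i + 1) ω := by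
  funext m
  simp only [shift, unblock, show i + (m + 1) = i + 1 + m by ring]

lemma unblock_block [NeZero n] (ω : ℕ → Fin n → A) :
    unblock n ω = unblock 0 (fun j => ω (j + 1)) := by
  funext m
  have h1 : (n + m) / n = m / n + 1 := by
    rw [Nat.add_div_left _ (NeZero.pos n)]
  have h2 : Fin.ofNat n (n + m) = Fin.ofNat n m := by
    ext; simp
  simp only [unblock, h1, h2, zero_add]

lemma unblock_eq_iterate [NeZero n] (i : ℕ) (ω : ℕ → Fin n → A) :
    unblock i ω = shift^[i] (unblock 0 ω) := by
  funext m
  rw [shift_iterate_apply]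
  simp [unblock]

/-- The sequence obtained from phased blocks. -/
def phasedUnblock [NeZero n] (p : (ℕ → Fin n → A) × Fin n) : ℕ → A := unblock p.2 p.1

lemma measurable_phasedUnblock [NeZero n] :
    Measurable (phasedUnblock : (ℕ → Fin n → A) × Fin n → (ℕ → A)) :=
  measurable_from_prod_countable_left fun i => measurable_unblock i

variable [IsProbabilityMeasure μ]

instance : IsProbabilityMeasure (μ.map (window n)) :=
  Measure.isProbabilityMeasure_map (measurable_window n).aemeasurable

instance : IsProbabilityMeasure (blocksLaw μ n) := by
  unfold blocksLaw; infer_instance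

lemma measurable_prodMk_phase (i : Fin n) :
    Measurable fun ω : ℕ → Fin n → A => (ω, i) := measurable_id.prodMk measurable_const

lemma phasedLaw_map {β : Type*} [MeasurableSpace β] {f : (ℕ → Fin n → A) × Fin n → β}
    (hf : Measurable f) :
    (phasedLaw μ n).map f = (n : ℝ≥0∞)⁻¹ • ∑ i : Fin n, (blocksLaw μ n).map fun ω => f (ω, i) := by
  unfold phasedLaw
  rw [Measure.map_smul, Measure.map_finset_sum hf.aemeasurable]
  congr 1
  refine Finset.sum_congr rfl fun i _ => ?_
  rw [Measure.map_map hf (measurable_prodMk_phase i)]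
  rfl

lemma phasedLaw_map_fst [NeZero n] : (phasedLaw μ n).map Prod.fst = blocksLaw μ n := by
  rw [phasedLaw_map μ measurable_fst]
  simp only [Measure.map_id', Finset.sum_const, Finset.card_univ, Fintype.card_fin]
  rw [← Nat.cast_smul_eq_nsmul ℝ≥0∞, smul_smul, ENNReal.inv_mul_cancel
    (by simpa using NeZero.ne n) (by simp), one_smul]

instance [NeZero n] : IsProbabilityMeasure (phasedLaw μ n) := by
  have : IsProbabilityMeasure ((phasedLaw μ n).map Prod.fst) := by
    rw [phasedLaw_map_fst]; infer_instance
  exact Measure.isProbabilityMeasure_of_map Prod.fst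

lemma blocksLaw_map_shift :
    (blocksLaw μ n).map (fun ω j => ω (j + 1)) = blocksLaw μ n := by
  unfold blocksLaw
  exact Measure.map_infinitePi_infinitePi_of_inj (add_left_injective 1)

variable (n) in
/-- The stationary block approximation of `μ`. -/
noncomputable def blockApprox [NeZero n] : ProbabilityMeasure (ℕ → A) :=
  ⟨(phasedLaw μ n).map phasedUnblock,
    Measure.isProbabilityMeasure_map measurable_phasedUnblock.aemeasurable⟩

lemma coe_blockApprox [NeZero n] : (blockApprox μ n : Measure (ℕ → A)) =
    (n : ℝ≥0∞)⁻¹ • ∑ i ∈ Finset.range n, (blocksLaw μ n).map (unblock i) := by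
  rw [Finset.sum_range]
  exact phasedLaw_map μ measurable_phasedUnblock

lemma blockApprox_invariant [NeZero n] : invariantPM (blockApprox μ n) := by
  unfold invariantPM
  rw [coe_blockApprox, Measure.map_smul, Measure.map_finset_sum measurable_shift.aemeasurable]
  congr 1
  have h : ∀ i, ((blocksLaw μ n).map (unblock i)).map shift = (blocksLaw μ n).map (unblock (i + 1)) := by
    intro i
    rw [Measure.map_map measurable_shift (measurable_unblock i)]
    congr 1
    funext ω
    exact shift_unblock i ω
  simp only [h]
  have hn : (blocksLaw μ n).map (unblock n) = (blocksLaw μ n).map (unblock 0) := by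
    have : (unblock n : (ℕ → Fin n → A) → _) = unblock 0 ∘ fun ω j => ω (j + 1) :=
      funext fun ω => unblock_block ω
    rw [this, ← Measure.map_map (measurable_unblock 0)
      (measurable_pi_iff.2 fun j => measurable_pi_apply (j + 1)), blocksLaw_map_shift]
  obtain ⟨k, hk⟩ : ∃ k, n = k + 1 := ⟨n - 1, by have := NeZero.pos n; omega⟩
  have h1 := Finset.sum_range_succ (fun i => (blocksLaw μ n).map (unblock i)) n
  have h2 := Finset.sum_range_succ' (fun i => (blocksLaw μ n).map (unblock i)) n
  rw [h1, hn] at h2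
  ext s hs
  have h3 := congrArg (fun ρ : Measure (ℕ → A) => ρ s) h2
  simp only [Measure.add_apply] at h3
  exact ((ENNReal.add_left_inj (measure_ne_top _ _)).1 h3).symm

end Block

section BlockApprox

open scoped ENNReal

variable (μ : Measure (ℕ → A)) {n : ℕ} [IsProbabilityMeasure μ]

lemma blocksLaw_zero_or_one {F : Set (ℕ → Fin n → A)} (hF : MeasurableSet F)
    (hinv : (fun ω j => ω (j + 1)) ⁻¹' F = F) : blocksLaw μ n F = 0 ∨ blocksLaw μ n F = 1 := by
  have hk : ∀ k : ℕ, (fun (ω : ℕ → Fin n → A) j => ω (j + k)) ⁻¹' F = F := by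
    intro k
    induction k with
    | zero => rfl
    | succ k ih =>
      conv_rhs => rw [← ih, ← hinv]
      ext ω
      simp only [Set.mem_preimage, add_right_comm, add_assoc]
  have hind := (ProbabilityTheory.iIndepFun_infinitePi (P := fun _ : ℕ => μ.map (window n))
    (X := fun _ w => w) fun _ => measurable_id).iIndep
  refine ProbabilityTheory.measure_zero_or_one_of_measurableSet_limsup_atTop
    (fun j => (measurable_pi_apply j).comap_le) hind ?_
  rw [limsup_eq_iInf_iSup_of_nat]
  rw [MeasurableSpace.measurableSet_iInf]
  intro k
  rw [← hk k]
  refine @measurable_pi_iff _ _ _ (_) _ _ |>.2 (fun j => ?_) hF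
  refine Measurable.mono (comap_measurable fun ω : ℕ → Fin n → A => ω (j + k)) ?_ le_rfl
  exact le_iSup₂_of_le (j + k) (by omega) le_rfl

lemma blockApprox_ergodic [NeZero n] : ErgodicPM (blockApprox μ n) := by
  refine ⟨⟨measurable_shift, blockApprox_invariant μ⟩, ⟨fun E hE hinv => ?_⟩⟩
  have hit : ∀ i : ℕ, shift^[i] ⁻¹' E = E := fun i => by
    rw [Set.preimage_iterate_eq]
    exact Function.iterate_fixed hinv i
  have hpre : ∀ i : ℕ, (unblock i : (ℕ → Fin n → A) → _) ⁻¹' E = unblock 0 ⁻¹' E := by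
    intro i
    conv_rhs => rw [← hit i]
    ext ω
    simp only [Set.mem_preimage, ← unblock_eq_iterate]
  have h01 := blocksLaw_zero_or_one μ (measurable_unblock (n := n) 0 hE) (by
    conv_rhs => rw [← hpre n]
    ext ω
    simp only [Set.mem_preimage, unblock_block])
  have hval : (blockApprox μ n : Measure (ℕ → A)) E = blocksLaw μ n (unblock 0 ⁻¹' E) := by
    rw [coe_blockApprox]
    simp only [Measure.smul_apply, Measure.finsetSum_apply,
      Measure.map_apply (measurable_unblock _) hE, hpre, Finset.sum_const, Finset.card_range,
      smul_eq_mul, nsmul_eq_mul]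
    rw [← mul_assoc, ENNReal.inv_mul_cancel (by simpa using NeZero.ne n) (by simp), one_mul]
  rw [← hval] at h01
  rw [eventuallyConst_set]
  rcases h01 with h | h
  · right
    rw [measure_eq_zero_iff_ae_notMem] at h
    filter_upwards [h] with x hx using hx
  · left
    exact (prob_compl_eq_zero_iff hE).2 h

lemma shannon_phasedLaw_fst [NeZero n] {S : Type*} [Fintype S] {Z : (ℕ → Fin n → A) → S}
    (hZ : MeasurableFibers Z) :
    shannon (phasedLaw μ n) (fun p => Z p.1) = shannon (blocksLaw μ n) Z := by
  rw [← shannon_map _ measurable_fst hZ, phasedLaw_map_fst]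

lemma shannon_block (j : ℕ) :
    shannon (blocksLaw μ n) (fun ω => ω j) = shannon μ (window n) := by
  have h1 : (blocksLaw μ n).map (fun ω => ω j) = μ.map (window n) :=
    Measure.infinitePi_map_eval _ j
  have h2 : MeasurableFibers (fun w : Fin n → A => w) := .of_measurable measurable_id
  have h3 := shannon_map (blocksLaw μ n) (measurable_pi_apply j) h2
  rw [h1, shannon_map μ (measurable_window n) h2] at h3
  exact h3.symm

lemma measurableFibers_phase : MeasurableFibers
    (Prod.snd : (ℕ → Fin n → A) × Fin n → Fin n) := .of_measurable measurable_snd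

lemma blockEntropy_blockApprox_le [NeZero n] (m : ℕ) :
    blockEntropy (blockApprox μ n) m ≤
      shannon (phasedLaw μ n) Prod.snd + ((m / n + 2 : ℕ) : ℝ) * shannon μ (window n) := by
  have hb : ∀ j, MeasurableFibers fun p : (ℕ → Fin n → A) × Fin n => p.1 j := fun j =>
    .of_measurable ((measurable_pi_apply j).comp measurable_fst)
  have hpi : MeasurableFibers fun (p : (ℕ → Fin n → A) × Fin n) (j : Fin (m / n + 2)) => p.1 j :=
    .pi fun j => hb j
  have hlt : ∀ (i : Fin n) (k : Fin m), ((i : ℕ) + k) / n < m / n + 2 := by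
    intro i k
    calc ((i : ℕ) + k) / n ≤ (n + m) / n := Nat.div_le_div_right (by omega)
      _ = m / n + 1 := Nat.add_div_left _ (NeZero.pos n)
      _ < _ := by omega
  have h1 := shannon_comp_le (phasedLaw μ n) (measurableFibers_phase.prodMk hpi)
    (fun (q : Fin n × (Fin (m / n + 2) → Fin n → A)) (k : Fin m) =>
      q.2 ⟨((q.1 : ℕ) + k) / n, hlt q.1 k⟩ (Fin.ofNat n (q.1 + k)))
  have h2 := shannon_prodMk_le (phasedLaw μ n) measurableFibers_phase hpi
  have h3 := shannon_pi_le (phasedLaw μ n) (fun j : Fin (m / n + 2) => hb j)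
  have h4 : ∀ j, shannon (phasedLaw μ n) (fun p => p.1 j) = shannon μ (window n) := fun j => by
    rw [shannon_phasedLaw_fst μ (Z := fun ω => ω j) (.of_measurable (measurable_pi_apply j)),
      shannon_block]
  simp only [h4, Finset.sum_const, Finset.card_univ, Fintype.card_fin, nsmul_eq_mul] at h3
  have h5 : blockEntropy (blockApprox μ n) m = _ := (blockEntropy_eq _ _).trans
    (shannon_map (phasedLaw μ n) measurable_phasedUnblock (.of_measurable (measurable_window m)))
  rw [h5]
  refine le_trans h1 (h2.trans ?_)
  linarith

lemma le_blockEntropy_blockApprox [NeZero n] (m : ℕ) :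
    ((m / n - 1 : ℕ) : ℝ) * shannon μ (window n) ≤
      shannon (phasedLaw μ n) Prod.snd + blockEntropy (blockApprox μ n) m := by
  set K := m / n - 1 with hK
  have hw : MeasurableFibers fun p : (ℕ → Fin n → A) × Fin n => window m (phasedUnblock p) :=
    .of_measurable ((measurable_window m).comp measurable_phasedUnblock)
  have hlt : ∀ (i : Fin n) (j : Fin K) (r : Fin n), ((j : ℕ) + 1) * n + r - i < m := by
    intro i j r
    have hj := j.2
    have h1 : ((j : ℕ) + 2) * n ≤ (m / n) * n := Nat.mul_le_mul_right n (by omega)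
    have h2 := Nat.div_mul_le_self m n
    have := r.2
    have : ((j : ℕ) + 2) * n = (j + 1) * n + n := by ring
    omega
  have h1 := shannon_comp_le (phasedLaw μ n) (measurableFibers_phase.prodMk hw)
    (fun (q : Fin n × (Fin m → A)) (j : Fin K) (r : Fin n) =>
      q.2 ⟨((j : ℕ) + 1) * n + r - q.1, hlt q.1 j r⟩)
  have h2 := shannon_prodMk_le (phasedLaw μ n) measurableFibers_phase hw
  have h3 : (fun (p : (ℕ → Fin n → A) × Fin n) (j : Fin K) (r : Fin n) =>
      window m (phasedUnblock p) ⟨((j : ℕ) + 1) * n + r - p.2, hlt p.2 j r⟩)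
      = fun p (j : Fin K) => p.1 (j + 1) := by
    funext p j r
    have hle : (p.2 : ℕ) ≤ ((j : ℕ) + 1) * n + r := by
      have := p.2.2
      nlinarith
    have hdiv : (((j : ℕ) + 1) * n + r) / n = j + 1 := by
      rw [mul_comm, Nat.mul_add_div (NeZero.pos n), Nat.div_eq_of_lt r.2, add_zero]
    have hof : Fin.ofNat n (((j : ℕ) + 1) * n + r) = r := by
      ext
      simp [Nat.mod_eq_of_lt r.2]
    simp only [window, phasedUnblock, unblock, Nat.add_sub_cancel' hle, hdiv, hof]
  have hind : ProbabilityTheory.iIndepFun (fun j (ω : ℕ → Fin n → A) => ω (j + 1))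
      (blocksLaw μ n) := by
    have := ProbabilityTheory.iIndepFun_infinitePi (P := fun _ : ℕ => μ.map (window n))
      (X := fun _ w => w) fun _ => measurable_id
    exact this.precomp (add_left_injective 1)
  have h4 := sum_shannon_le_shannon_pi (blocksLaw μ n)
    (fun j => measurable_pi_apply (j + 1)) hind K
  simp only [shannon_block, Finset.sum_const, Finset.card_range, nsmul_eq_mul] at h4
  rw [← shannon_phasedLaw_fst μ (Z := fun (ω : ℕ → Fin n → A) (j : Fin K) => ω (j + 1))
    (.pi fun j => .of_measurable (measurable_pi_apply ((j : ℕ) + 1)))] at h4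
  simp only [h3] at h1
  have h5 : blockEntropy (blockApprox μ n) m = _ := (blockEntropy_eq _ _).trans
    (shannon_map (phasedLaw μ n) measurable_phasedUnblock (.of_measurable (measurable_window m)))
  rw [h5]
  exact h4.trans (h1.trans h2)

lemma ksEntropy_blockApprox [NeZero n] :
    ksEntropy (blockApprox μ n) = shannon μ (window n) / n := by
  set H := shannon μ (window n)
  set I := shannon (phasedLaw μ n) Prod.snd
  have hH : 0 ≤ H := shannon_nonneg _ _
  have hI : 0 ≤ I := shannon_nonneg _ _
  have hn : (0 : ℝ) < n := by exact_mod_cast NeZero.pos n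
  have hdiv : ∀ m : ℕ, ((m / n : ℕ) : ℝ) ≤ m / n := fun m => Nat.cast_div_le
  have hdiv' : ∀ m : ℕ, (m : ℝ) / n - 1 ≤ ((m / n : ℕ) : ℝ) := fun m => by
    have : m < n * (m / n + 1) := Nat.lt_mul_div_succ m (NeZero.pos n)
    have h' : (m : ℝ) < n * ((m / n : ℕ) + 1) := by exact_mod_cast this
    rw [sub_le_iff_le_add, div_le_iff₀ hn]
    linarith
  have hup : ∀ m : ℕ, blockEntropy (blockApprox μ n) m ≤ (m : ℝ) / n * H + (I + 2 * H) := by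
    intro m
    have h := blockEntropy_blockApprox_le μ (n := n) m
    have h' := mul_le_mul_of_nonneg_right (hdiv m) hH
    push_cast at h
    linarith
  have hlo : ∀ m : ℕ, (m : ℝ) / n * H - (I + 2 * H) ≤ blockEntropy (blockApprox μ n) m := by
    intro m
    have h := le_blockEntropy_blockApprox μ (n := n) m
    have h1 : ((m / n : ℕ) : ℝ) - 1 ≤ ((m / n - 1 : ℕ) : ℝ) := by
      rw [sub_le_iff_le_add]; exact_mod_cast (by omega : m / n ≤ m / n - 1 + 1)
    have h' := mul_le_mul_of_nonneg_right ((sub_le_sub_right (hdiv' m) 1).trans h1) hH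
    linarith
  refine Tendsto.limsup_eq ?_
  have hc : Tendsto (fun m : ℕ => (I + 2 * H) / (m : ℝ)) atTop (𝓝 0) :=
    tendsto_const_div_atTop_nhds_zero_nat _
  refine tendsto_of_tendsto_of_tendsto_of_le_of_le'
    (g := fun m : ℕ => H / n - (I + 2 * H) / (m : ℝ)) (h := fun m : ℕ => H / n + (I + 2 * H) / (m : ℝ))
    (by simpa using hc.const_sub (H / n)) (by simpa using hc.const_add (H / n)) ?_ ?_
  · filter_upwards [eventually_gt_atTop 0] with m hm
    have hm' : (0 : ℝ) < m := by exact_mod_cast hm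
    rw [le_div_iff₀ hm']
    refine le_trans (le_of_eq ?_) (hlo m)
    field_simp
  · filter_upwards [eventually_gt_atTop 0] with m hm
    have hm' : (0 : ℝ) < m := by exact_mod_cast hm
    rw [div_le_iff₀ hm']
    refine (hup m).trans (le_of_eq ?_)
    field_simp

end BlockApprox

lemma cyl_inter_of_le {j k : ℕ} (hjk : j ≤ k) (v : Fin j → A) (w : Fin k → A)
    (h : (cyl v ∩ cyl w).Nonempty) : cyl v ∩ cyl w = cyl w := by
  obtain ⟨x, hv, hw⟩ := h
  refine Set.inter_eq_right.2 fun y hy i => ?_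
  rw [← hv i]
  exact (hy ⟨i, i.2.trans_le hjk⟩).trans (hw ⟨i, i.2.trans_le hjk⟩).symm

lemma isPiSystem_cyl :
    IsPiSystem {s : Set (ℕ → A) | ∃ (k : ℕ) (w : Fin k → A), s = cyl w} := by
  rintro _ ⟨j, v, rfl⟩ _ ⟨k, w, rfl⟩ h
  rcases le_total j k with hjk | hjk
  · exact ⟨k, w, cyl_inter_of_le hjk v w h⟩
  · exact ⟨j, v, by rw [Set.inter_comm] at h ⊢; exact cyl_inter_of_le hjk w v h⟩

lemma exists_cyl_subset {u : Set (ℕ → A)} (hu : IsOpen u) {x : ℕ → A} (hx : x ∈ u) :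
    ∃ k : ℕ, cyl (window k x) ⊆ u := by
  obtain ⟨I, v, hI, hsub⟩ := isOpen_pi_iff.1 hu x hx
  obtain ⟨k, hk⟩ := I.exists_nat_subset_range
  refine ⟨k, fun y hy => hsub fun i hi => ?_⟩
  have := hy ⟨i, Finset.mem_range.1 (hk hi)⟩
  simp only [window] at this
  rw [this]
  exact (hI i hi).2

lemma mem_cyl_window (k : ℕ) (x : ℕ → A) : x ∈ cyl (window k x) := fun _ => rfl

lemma tendsto_of_tendsto_cyl {μs : ℕ → ProbabilityMeasure (ℕ → A)}
    {μ : ProbabilityMeasure (ℕ → A)}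
    (h : ∀ (k : ℕ) (w : Fin k → A), Tendsto (fun n => (μs n : Measure (ℕ → A)).real (cyl w)) atTop
      (𝓝 ((μ : Measure (ℕ → A)).real (cyl w)))) :
    Tendsto μs atTop (𝓝 μ) := by
  refine isPiSystem_cyl.tendsto_probabilityMeasure_of_tendsto_of_mem ?_ ?_ ?_
  · rintro _ ⟨k, w, rfl⟩
    exact measurableSet_cyl w
  · intro u hu x hx
    obtain ⟨k, hk⟩ := exists_cyl_subset hu hx
    exact ⟨_, ⟨k, _, rfl⟩, (isClopen_cyl _).isOpen.mem_nhds (mem_cyl_window k x), hk⟩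
  · rintro _ ⟨k, w, rfl⟩
    exact NNReal.tendsto_coe.1 (h k w)

lemma exists_cyl_nhd {U : Set (ProbabilityMeasure (ℕ → A))} (hU : IsOpen U)
    {μ : ProbabilityMeasure (ℕ → A)} (hμ : μ ∈ U) :
    ∃ K : ℕ, ∃ δ : ℝ, 0 < δ ∧ ∀ ν : ProbabilityMeasure (ℕ → A),
      (∀ k ≤ K, ∀ w : Fin k → A, |(ν : Measure (ℕ → A)).real (cyl w) -
        (μ : Measure (ℕ → A)).real (cyl w)| < δ) → ν ∈ U := by
  by_contra! hcon
  choose ν hν hνU using fun n : ℕ => hcon n (1 / ((n : ℝ) + 1)) (by positivity)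
  have ht : Tendsto ν atTop (𝓝 μ) := by
    refine tendsto_of_tendsto_cyl fun k w => ?_
    rw [tendsto_iff_dist_tendsto_zero]
    refine squeeze_zero' (.of_forall fun _ => dist_nonneg) ?_
      (tendsto_one_div_add_atTop_nhds_zero_nat (𝕜 := ℝ))
    filter_upwards [eventually_ge_atTop k] with n hn
    rw [Real.dist_eq]
    exact (hν n k hn w).le
  obtain ⟨n, hn⟩ := (ht.eventually (hU.mem_nhds hμ)).exists
  exact hνU n hn

section

open scoped ENNReal

lemma invariantPM.map_iterate {μ : ProbabilityMeasure (ℕ → A)} (hμ : invariantPM μ) (i : ℕ) :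
    (μ : Measure (ℕ → A)).map (shift^[i]) = μ :=
  ((MeasurePreserving.mk measurable_shift hμ).iterate i).map_eq

lemma blocksLaw_unblock_cyl {μ : ProbabilityMeasure (ℕ → A)} (hμ : invariantPM μ) {n : ℕ}
    [NeZero n] {k : ℕ} (w : Fin k → A) {i : ℕ} (hi : i + k ≤ n) :
    ((blocksLaw (μ : Measure (ℕ → A)) n).map (unblock i)).real (cyl w) =
      (μ : Measure (ℕ → A)).real (cyl w) := by
  have hmeas : MeasurableSet {v : Fin n → A | ∀ j : Fin k, v ⟨i + j, by omega⟩ = w j} := by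
    measurability
  have h1 : unblock i ⁻¹' cyl w = (fun ω : ℕ → Fin n → A => ω 0) ⁻¹'
      {v | ∀ j : Fin k, v ⟨i + j, by omega⟩ = w j} := by
    ext ω
    simp only [cyl, unblock, Set.mem_preimage, Set.mem_ofPred_eq]
    refine forall_congr' fun j => ?_
    have hlt : i + (j : ℕ) < n := by omega
    have h0 : (i + (j : ℕ)) / n = 0 := Nat.div_eq_of_lt hlt
    have hf : Fin.ofNat n (i + j) = ⟨i + j, hlt⟩ := by
      ext
      simp [Nat.mod_eq_of_lt hlt]
    rw [h0, hf]
  have h2 : (blocksLaw (μ : Measure (ℕ → A)) n).map (fun ω => ω 0) =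
      (μ : Measure (ℕ → A)).map (window n) := Measure.infinitePi_map_eval _ 0
  rw [map_measureReal_apply (measurable_unblock i) (measurableSet_cyl w), h1,
    ← map_measureReal_apply (measurable_pi_apply 0) hmeas, h2,
    map_measureReal_apply (measurable_window n) hmeas]
  conv_rhs => rw [← hμ.map_iterate i,
    map_measureReal_apply (measurable_shift.iterate i) (measurableSet_cyl w)]
  congr 1
  ext x
  simp [cyl, window, shift_iterate_apply]

lemma blockApprox_cyl_sub_le {μ : ProbabilityMeasure (ℕ → A)} (hμ : invariantPM μ) {n : ℕ}
    [NeZero n] {k : ℕ} (w : Fin k → A) :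
    |(blockApprox (μ : Measure (ℕ → A)) n : Measure (ℕ → A)).real (cyl w) -
      (μ : Measure (ℕ → A)).real (cyl w)| ≤ k / n := by
  have hn : (0 : ℝ) < n := by exact_mod_cast NeZero.pos n
  set p := (μ : Measure (ℕ → A)).real (cyl w)
  set q : ℕ → ℝ := fun i => ((blocksLaw (μ : Measure (ℕ → A)) n).map (unblock i)).real (cyl w)
    with hq
  have hprob : ∀ i, IsProbabilityMeasure ((blocksLaw (μ : Measure (ℕ → A)) n).map (unblock i)) :=
    fun i => Measure.isProbabilityMeasure_map (measurable_unblock i).aemeasurable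
  have h1 : (blockApprox (μ : Measure (ℕ → A)) n : Measure (ℕ → A)).real (cyl w) =
      (∑ i ∈ Finset.range n, q i) / n := by
    rw [coe_blockApprox, measureReal_ennreal_smul_apply, measureReal_def, Measure.finsetSum_apply,
      ENNReal.toReal_sum fun i _ => measure_ne_top _ _]
    simp [hq, measureReal_def, div_eq_inv_mul]
  have h2 : ∀ i ∈ Finset.range n, |q i - p| ≤ if n < i + k then 1 else 0 := by
    intro i _
    split_ifs with h
    · have := measureReal_nonneg (μ := (μ : Measure (ℕ → A))) (s := cyl w)
      have := measureReal_le_one (μ := (μ : Measure (ℕ → A))) (s := cyl w)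
      have := measureReal_nonneg (μ := (blocksLaw (μ : Measure (ℕ → A)) n).map (unblock i))
        (s := cyl w)
      have := measureReal_le_one (μ := (blocksLaw (μ : Measure (ℕ → A)) n).map (unblock i))
        (s := cyl w)
      rw [abs_le]
      constructor <;> simp only [hq, p] <;> linarith
    · simp only [hq, p, blocksLaw_unblock_cyl hμ w (not_lt.1 h), sub_self, abs_zero, le_refl]
  have h3 : (∑ i ∈ Finset.range n, q i) / n - p = (∑ i ∈ Finset.range n, (q i - p)) / n := by
    rw [Finset.sum_sub_distrib]
    simp
    field_simp
  have h4 : ∑ i ∈ Finset.range n, (if n < i + k then (1 : ℝ) else 0) ≤ k := by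
    rw [← Finset.sum_filter, Finset.sum_const, nsmul_eq_mul, mul_one]
    norm_cast
    calc _ ≤ (Finset.Ico (n - k) n).card := Finset.card_le_card fun i => by
            simp only [Finset.mem_filter, Finset.mem_range, Finset.mem_Ico]; omega
      _ ≤ k := by rw [Nat.card_Ico]; omega
  rw [h1, h3, abs_div, abs_of_pos hn]
  gcongr
  exact (Finset.abs_sum_le_sum_abs _ _).trans ((Finset.sum_le_sum h2).trans h4)

end

lemma blockEntropy_div_nonneg (μ : ProbabilityMeasure (ℕ → A)) (m : ℕ) :
    0 ≤ blockEntropy μ m / m := by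
  rw [blockEntropy_eq]
  exact div_nonneg (shannon_nonneg _ _) (Nat.cast_nonneg m)

lemma blockEntropy_div_le (μ : ProbabilityMeasure (ℕ → A)) (m : ℕ) :
    blockEntropy μ m / m ≤ Fintype.card A := by
  refine div_le_of_le_mul₀ (Nat.cast_nonneg m) (Nat.cast_nonneg _) ?_
  rw [blockEntropy_eq]
  refine (shannon_pi_le (μ : Measure (ℕ → A)) (Z := fun (i : Fin m) x => x i)
    fun i => .of_measurable (measurable_pi_apply _)).trans ?_
  have h : ∀ i : Fin m, shannon (μ : Measure (ℕ → A)) (fun x => x i) ≤ Fintype.card A := by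
    intro i
    refine (Finset.sum_le_card_nsmul _ _ 1 fun a _ => ?_).trans (by simp)
    refine (Real.negMulLog_le_one_sub_self measureReal_nonneg).trans ?_
    exact sub_le_self _ measureReal_nonneg
  refine (Finset.sum_le_card_nsmul _ _ _ fun i _ => h i).trans ?_
  simp [mul_comm]

lemma isBoundedUnder_blockEntropy (μ : ProbabilityMeasure (ℕ → A)) :
    atTop.IsBoundedUnder (· ≤ ·) fun m : ℕ => blockEntropy μ m / m :=
  isBoundedUnder_of ⟨_, blockEntropy_div_le μ⟩

lemma isCoboundedUnder_blockEntropy (μ : ProbabilityMeasure (ℕ → A)) :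
    atTop.IsCoboundedUnder (· ≤ ·) fun m : ℕ => blockEntropy μ m / m :=
  (isBoundedUnder_of ⟨0, blockEntropy_div_nonneg μ⟩ :
    atTop.IsBoundedUnder (· ≥ ·) fun m : ℕ => blockEntropy μ m / m).isCoboundedUnder_le

lemma ksEntropy_le_add {μ ν : ProbabilityMeasure (ℕ → A)} {η : ℝ}
    (h : ∀ m : ℕ, blockEntropy μ m ≤ blockEntropy ν m + m * η) :
    ksEntropy μ ≤ ksEntropy ν + η := by
  unfold ksEntropy
  rw [← limsup_add_const atTop _ η (isBoundedUnder_blockEntropy ν)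
    (isCoboundedUnder_blockEntropy ν)]
  refine limsup_le_limsup ?_ (isCoboundedUnder_blockEntropy μ) ?_
  · filter_upwards [eventually_gt_atTop 0] with m hm
    have hm' : (0 : ℝ) < m := by exact_mod_cast hm
    rw [div_add' _ _ _ hm'.ne', mul_comm η]
    gcongr
    exact h m
  · exact isBoundedUnder_of ⟨_, fun m => add_le_add_left (blockEntropy_div_le ν m) η⟩

lemma exists_shannon_option_lt (S : Type*) [Fintype S] {ε : ℝ} (hε : 0 < ε) :
    ∃ δ : ℝ, 0 < δ ∧ ∀ {Ω : Type} [MeasurableSpace Ω] (P : Measure Ω) [IsProbabilityMeasure P]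
      (Z : Ω → Option S), MeasurableFibers Z → P.real {ω | Z ω ≠ none} < δ → shannon P Z < ε := by
  set c : ℝ := ε / (Fintype.card (Option S) + 1)
  have hcard : (0 : ℝ) < Fintype.card (Option S) + 1 := by positivity
  have hc : 0 < c := by positivity
  have h0 := Metric.continuous_iff.1 Real.continuous_negMulLog 0 c hc
  have h1 := Metric.continuous_iff.1 Real.continuous_negMulLog 1 c hc
  obtain ⟨δ₀, hδ₀, h0⟩ := h0
  obtain ⟨δ₁, hδ₁, h1⟩ := h1
  refine ⟨min δ₀ δ₁, lt_min hδ₀ hδ₁, fun {Ω} _ P _ Z hZ hlt => ?_⟩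
  have hb : ∀ s ∈ Finset.univ, Real.negMulLog (P.real (Z ⁻¹' {s})) ≤ c := by
    rintro (_ | s) -
    · have hcompl : {ω | Z ω ≠ none} = (Z ⁻¹' {none})ᶜ := by
        ext; simp
      rw [hcompl, probReal_compl_eq_one_sub (hZ none)] at hlt
      have := h1 (P.real (Z ⁻¹' {none})) (by
        rw [Real.dist_eq, abs_sub_comm, abs_of_nonneg (sub_nonneg.2 measureReal_le_one)]
        exact hlt.trans_le (min_le_right _ _))
      rw [Real.negMulLog_one, Real.dist_eq, sub_zero] at this
      exact (le_abs_self _).trans this.le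
    · have hle : P.real (Z ⁻¹' {some s}) ≤ P.real {ω | Z ω ≠ none} :=
        measureReal_mono fun ω hω => by simp_all
      have := h0 (P.real (Z ⁻¹' {some s})) (by
        rw [Real.dist_eq, sub_zero, abs_of_nonneg measureReal_nonneg]
        exact (hle.trans_lt hlt).trans_le (min_le_left _ _))
      rw [Real.negMulLog_zero, Real.dist_eq, sub_zero] at this
      exact (le_abs_self _).trans this.le
  calc shannon P Z ≤ Fintype.card (Option S) * c := by
        refine (Finset.sum_le_card_nsmul _ _ _ hb).trans ?_
        simp
    _ < (Fintype.card (Option S) + 1) * c := by linarith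
    _ = ε := mul_div_cancel₀ _ hcard.ne'

section Joining

variable {ξ : Measure ((ℕ → A) × (ℕ → A))} {μ ν : ProbabilityMeasure (ℕ → A)}

lemma IsJoining.isProbabilityMeasure (h : IsJoining ξ μ ν) : IsProbabilityMeasure ξ := by
  have : IsProbabilityMeasure (ξ.map Prod.fst) := by
    rw [h.2.1]; infer_instance
  exact Measure.isProbabilityMeasure_of_map Prod.fst

lemma measurable_prodShift :
    Measurable (Prod.map shift shift : (ℕ → A) × (ℕ → A) → (ℕ → A) × (ℕ → A)) :=
  measurable_shift.prodMap measurable_shift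

lemma IsJoining.swap (h : IsJoining ξ μ ν) : IsJoining (ξ.map Prod.swap) ν μ := by
  refine ⟨?_, ?_, ?_⟩
  · rw [Measure.map_map measurable_prodShift measurable_swap]
    conv_rhs => rw [← h.1, Measure.map_map measurable_swap measurable_prodShift]
    rfl
  · rw [Measure.map_map measurable_fst measurable_swap]
    exact h.2.2
  · rw [Measure.map_map measurable_snd measurable_swap]
    exact h.2.1

lemma measurableSet_ne (i : ℕ) : MeasurableSet {p : (ℕ → A) × (ℕ → A) | p.1 i ≠ p.2 i} :=
  (measurableSet_eq_fun ((measurable_pi_apply i).comp measurable_fst)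
    ((measurable_pi_apply i).comp measurable_snd)).compl

lemma prodShift_iterate (i : ℕ) (p : (ℕ → A) × (ℕ → A)) :
    (Prod.map shift shift)^[i] p = (shift^[i] p.1, shift^[i] p.2) := by
  rw [Prod.map_iterate]
  rfl

lemma IsJoining.map_iterate (h : IsJoining ξ μ ν) (i : ℕ) :
    ξ.map (Prod.map shift shift)^[i] = ξ :=
  ((MeasurePreserving.mk measurable_prodShift h.1).iterate i).map_eq

lemma real_ne_swap (ξ : Measure ((ℕ → A) × (ℕ → A))) :
    (ξ.map Prod.swap).real {p | p.1 0 ≠ p.2 0} = ξ.real {p | p.1 0 ≠ p.2 0} := by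
  rw [map_measureReal_apply measurable_swap (measurableSet_ne 0)]
  congr 1
  ext p
  exact ne_comm

lemma IsJoining.real_ne (h : IsJoining ξ μ ν) (i : ℕ) :
    ξ.real {p | p.1 i ≠ p.2 i} = ξ.real {p | p.1 0 ≠ p.2 0} := by
  conv_rhs => rw [← h.map_iterate i,
    map_measureReal_apply (measurable_prodShift.iterate i) (measurableSet_ne 0)]
  simp only [Set.preimage_ofPred_eq, prodShift_iterate, shift_iterate_apply, add_zero]

lemma IsJoining.cyl_le (h : IsJoining ξ μ ν) {k : ℕ} (w : Fin k → A) :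
    (μ : Measure (ℕ → A)).real (cyl w) ≤
      (ν : Measure (ℕ → A)).real (cyl w) + k * ξ.real {p | p.1 0 ≠ p.2 0} := by
  have := h.isProbabilityMeasure
  rw [← h.2.1, ← h.2.2, map_measureReal_apply measurable_fst (measurableSet_cyl w),
    map_measureReal_apply measurable_snd (measurableSet_cyl w)]
  have hsub : (Prod.fst ⁻¹' cyl w : Set ((ℕ → A) × (ℕ → A))) ⊆
      Prod.snd ⁻¹' cyl w ∪ ⋃ i : Fin k, {p | p.1 i ≠ p.2 i} := by
    intro p hp
    by_cases hall : ∀ i : Fin k, p.1 i = p.2 i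
    · exact Or.inl fun i => (hall i).symm.trans (hp i)
    · exact Or.inr (by simpa using hall)
  refine (measureReal_mono hsub).trans ((measureReal_union_le _ _).trans ?_)
  gcongr
  refine (measureReal_iUnion_fintype_le _).trans ?_
  simp [h.real_ne]

lemma IsJoining.abs_cyl_sub_le (h : IsJoining ξ μ ν) {k : ℕ} (w : Fin k → A) :
    |(μ : Measure (ℕ → A)).real (cyl w) - (ν : Measure (ℕ → A)).real (cyl w)| ≤
      k * ξ.real {p | p.1 0 ≠ p.2 0} := by
  have h1 := h.cyl_le w
  have h2 := h.swap.cyl_le w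
  rw [real_ne_swap] at h2
  rw [abs_le]
  constructor <;> linarith

/-- The `i`-th symbol of the first sequence where it differs from that of the second. -/
def discrepancy (i : ℕ) (p : (ℕ → A) × (ℕ → A)) : Option A :=
  if p.1 i = p.2 i then none else some (p.1 i)

lemma measurableFibers_discrepancy (i : ℕ) :
    MeasurableFibers (discrepancy i : (ℕ → A) × (ℕ → A) → Option A) := by
  have h : MeasurableFibers fun p : (ℕ → A) × (ℕ → A) => (p.1 i, p.2 i) :=
    .of_measurable (((measurable_pi_apply i).comp measurable_fst).prodMk
      ((measurable_pi_apply i).comp measurable_snd))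
  exact h.comp fun q : A × A => if q.1 = q.2 then none else some q.1

lemma IsJoining.shannon_discrepancy (h : IsJoining ξ μ ν) (i : ℕ) :
    shannon ξ (discrepancy i) = shannon ξ (discrepancy 0) := by
  conv_rhs => rw [← h.map_iterate i,
    shannon_map ξ (measurable_prodShift.iterate i) (measurableFibers_discrepancy 0)]
  simp only [discrepancy, prodShift_iterate, shift_iterate_apply, add_zero]
  rfl

lemma IsJoining.blockEntropy_le (h : IsJoining ξ μ ν) (m : ℕ) :
    blockEntropy μ m ≤ blockEntropy ν m + m * shannon ξ (discrepancy 0) := by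
  have := h.isProbabilityMeasure
  have hw : MeasurableFibers fun p : (ℕ → A) × (ℕ → A) => window m p.2 :=
    .of_measurable ((measurable_window m).comp measurable_snd)
  have hd : MeasurableFibers fun (p : (ℕ → A) × (ℕ → A)) (i : Fin m) => discrepancy i p :=
    .pi fun i => measurableFibers_discrepancy i
  have h1 := shannon_comp_le ξ (hw.prodMk hd)
    fun (q : (Fin m → A) × (Fin m → Option A)) (i : Fin m) => (q.2 i).getD (q.1 i)
  have h2 := shannon_prodMk_le ξ hw hd
  have h3 := shannon_pi_le ξ fun i : Fin m => measurableFibers_discrepancy (A := A) i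
  simp only [h.shannon_discrepancy, Finset.sum_const, Finset.card_univ, Fintype.card_fin,
    nsmul_eq_mul] at h3
  have h4 : (fun (p : (ℕ → A) × (ℕ → A)) (i : Fin m) => (discrepancy i p).getD (window m p.2 i)) =
      fun p => window m p.1 := by
    funext p i
    by_cases hp : p.1 i = p.2 i <;> simp [discrepancy, window, hp]
  simp only [h4] at h1
  rw [blockEntropy_eq, blockEntropy_eq, ← h.2.1, ← h.2.2,
    shannon_map ξ measurable_fst (.of_measurable (measurable_window m)),
    shannon_map ξ measurable_snd (.of_measurable (measurable_window m))]
  linarith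

end Joining

lemma exists_abs_ksEntropy_sub_lt (A : Type) [Fintype A] [DecidableEq A] [Inhabited A]
    [TopologicalSpace A] [DiscreteTopology A] [MeasurableSpace A] [MeasurableSingletonClass A]
    {ε : ℝ} (hε : 0 < ε) : ∃ δ : ℝ, 0 < δ ∧
      ∀ (ξ : Measure ((ℕ → A) × (ℕ → A))) (μ ν : ProbabilityMeasure (ℕ → A)), IsJoining ξ μ ν →
        ξ.real {p | p.1 0 ≠ p.2 0} < δ → |ksEntropy μ - ksEntropy ν| < ε := by
  obtain ⟨δ, hδ, hδε⟩ := exists_shannon_option_lt A hε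
  have key : ∀ (ξ : Measure ((ℕ → A) × (ℕ → A))) (μ ν : ProbabilityMeasure (ℕ → A)),
      IsJoining ξ μ ν → ξ.real {p | p.1 0 ≠ p.2 0} < δ → ksEntropy μ < ksEntropy ν + ε := by
    intro ξ μ ν h hlt
    have := h.isProbabilityMeasure
    have h1 := hδε ξ (discrepancy 0) (measurableFibers_discrepancy 0) (by
      have : {p : (ℕ → A) × (ℕ → A) | discrepancy 0 p ≠ none} = {p | p.1 0 ≠ p.2 0} := by
        ext p; simp [discrepancy]
      rwa [this])
    have h2 := ksEntropy_le_add h.blockEntropy_le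
    linarith
  refine ⟨δ, hδ, fun ξ μ ν h hlt => ?_⟩
  have h1 := key ξ μ ν h hlt
  have h2 := key _ ν μ h.swap (by rwa [real_ne_swap])
  rw [abs_lt]
  constructor <;> linarith

lemma sfinite_probabilityMeasure {Ω : Type*} [MeasurableSpace Ω] (μ : ProbabilityMeasure Ω) :
    SFinite (μ : Measure Ω) :=
  inferInstance

lemma continuous_real_of_isClopen {Ω : Type*} [MeasurableSpace Ω] [TopologicalSpace Ω]
    [OpensMeasurableSpace Ω] [HasOuterApproxClosed Ω] {s : Set Ω} (hs : IsClopen s) :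
    Continuous fun ξ : ProbabilityMeasure Ω => (ξ : Measure Ω).real s :=
  continuous_iff_continuousAt.2 fun _ => NNReal.tendsto_coe.2
    (ProbabilityMeasure.tendsto_measure_of_isClopen_of_tendsto tendsto_id hs)

lemma isClosed_setOf_measure_eq_one {Ω : Type*} [MeasurableSpace Ω] [TopologicalSpace Ω]
    [OpensMeasurableSpace Ω] [HasOuterApproxClosed Ω] {F : Set Ω} (hF : IsClosed F) :
    IsClosed {ξ : ProbabilityMeasure Ω | (ξ : Measure Ω) F = 1} := by
  rw [isClosed_iff_ultrafilter]
  intro ξ u hu hmem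
  have h := ProbabilityMeasure.limsup_measure_closed_le_of_tendsto
    (show Tendsto id (u : Filter _) (𝓝 ξ) from hu) hF
  have h1 : Filter.limsup (fun ζ : ProbabilityMeasure Ω => (ζ : Measure Ω) F) u = 1 := by
    refine (limsup_congr ?_).trans (limsup_const (1 : ENNReal))
    exact hmem
  simp only [id] at h
  rw [h1] at h
  exact le_antisymm prob_le_one h

/-- The product of two cylinders. -/
def cylRect (q : (Σ k, Fin k → A) × (Σ k, Fin k → A)) : Set ((ℕ → A) × (ℕ → A)) :=
  cyl q.1.2 ×ˢ cyl q.2.2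

lemma isClopen_cylRect (q : (Σ k, Fin k → A) × (Σ k, Fin k → A)) : IsClopen (cylRect q) :=
  (isClopen_cyl _).prod (isClopen_cyl _)

lemma eq_of_cylRect {ξ₁ ξ₂ : ProbabilityMeasure ((ℕ → A) × (ℕ → A))}
    (h : ∀ q, (ξ₁ : Measure ((ℕ → A) × (ℕ → A))).real (cylRect q) =
      (ξ₂ : Measure ((ℕ → A) × (ℕ → A))).real (cylRect q)) : ξ₁ = ξ₂ := by
  have := ProbabilityMeasure.t2Space ((ℕ → A) × (ℕ → A))
  have ht : Tendsto (fun _ : ℕ => ξ₁) atTop (𝓝 ξ₂) := by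
    refine (isPiSystem_cyl.prod isPiSystem_cyl).tendsto_probabilityMeasure_of_tendsto_of_mem
      ?_ ?_ ?_
    · rintro _ ⟨_, ⟨k, v, rfl⟩, _, ⟨j, w, rfl⟩, rfl⟩
      exact (measurableSet_cyl v).prod (measurableSet_cyl w)
    · intro u hu x hx
      obtain ⟨u₁, u₂, h₁, h₂, hx₁, hx₂, hsub⟩ := isOpen_prod_iff.1 hu x.1 x.2 hx
      obtain ⟨k, hk⟩ := exists_cyl_subset h₁ hx₁
      obtain ⟨j, hj⟩ := exists_cyl_subset h₂ hx₂
      refine ⟨_, ⟨_, ⟨k, _, rfl⟩, _, ⟨j, _, rfl⟩, rfl⟩, ?_, (Set.prod_mono hk hj).trans hsub⟩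
      exact prod_mem_nhds ((isClopen_cyl _).isOpen.mem_nhds (mem_cyl_window k x.1))
        ((isClopen_cyl _).isOpen.mem_nhds (mem_cyl_window j x.2))
    · rintro _ ⟨_, ⟨k, v, rfl⟩, _, ⟨j, w, rfl⟩, rfl⟩
      have heq : ξ₁ (cyl v ×ˢ cyl w) = ξ₂ (cyl v ×ˢ cyl w) := by
        exact NNReal.coe_injective (h (⟨k, v⟩, ⟨j, w⟩))
      rw [heq]
      exact tendsto_const_nhds
  exact tendsto_nhds_unique tendsto_const_nhds ht

/-- Invariant measures on the product with second marginal `ν`, whose first marginal is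
carried by `X`. -/
def joiningsOver (X : Set (ℕ → A)) (ν : ProbabilityMeasure (ℕ → A)) :
    Set (ProbabilityMeasure ((ℕ → A) × (ℕ → A))) :=
  {ξ | (ξ : Measure ((ℕ → A) × (ℕ → A))).map (Prod.map shift shift) = ξ ∧
    (ξ : Measure ((ℕ → A) × (ℕ → A))).map Prod.snd = ν ∧
    (ξ : Measure ((ℕ → A) × (ℕ → A))) (Prod.fst ⁻¹' X) = 1}

lemma continuous_prodShift :
    Continuous (Prod.map shift shift : (ℕ → A) × (ℕ → A) → (ℕ → A) × (ℕ → A)) :=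
  continuous_shift.prodMap continuous_shift

lemma isClosed_joiningsOver {X : Set (ℕ → A)} (hX : IsClosed X)
    (ν : ProbabilityMeasure (ℕ → A)) : IsClosed (joiningsOver X ν) := by
  have := ProbabilityMeasure.t2Space ((ℕ → A) × (ℕ → A))
  have h1 := isClosed_eq (ProbabilityMeasure.continuous_map (continuous_prodShift (A := A)))
    continuous_id
  have h2 := isClosed_eq (ProbabilityMeasure.continuous_map
    (continuous_snd (X := ℕ → A) (Y := ℕ → A))) (continuous_const (y := ν))
  have h3 := isClosed_setOf_measure_eq_one (hX.preimage (continuous_fst (Y := ℕ → A)))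
  convert h1.inter (h2.inter h3) using 1
  ext ξ
  simp only [joiningsOver, Set.mem_inter_iff, Set.mem_ofPred_eq]
  exact and_congr (ProbabilityMeasure.toMeasure_injective.eq_iff
    (a := ξ.map continuous_prodShift.measurable.aemeasurable) (b := ξ))
    (and_congr (ProbabilityMeasure.toMeasure_injective.eq_iff
      (a := ξ.map measurable_snd.aemeasurable) (b := ν)) Iff.rfl)

lemma isClopen_ne_zero : IsClopen {p : (ℕ → A) × (ℕ → A) | p.1 0 ≠ p.2 0} :=
  (isClopen_discrete {q : A × A | q.1 ≠ q.2}).preimage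
    (f := fun p : (ℕ → A) × (ℕ → A) => (p.1 0, p.2 0)) (by fun_prop)

section Extreme

open scoped ENNReal

lemma mem_joiningsOver_of_smul_add {X : Set (ℕ → A)} (hX : IsClosed X)
    {ν : ProbabilityMeasure (ℕ → A)} (hν : ErgodicPM ν)
    {ξ ζ₁ ζ₂ : ProbabilityMeasure ((ℕ → A) × (ℕ → A))} (hξ : ξ ∈ joiningsOver X ν)
    (h₁ : (ζ₁ : Measure ((ℕ → A) × (ℕ → A))).map (Prod.map shift shift) = ζ₁)
    (h₂ : (ζ₂ : Measure ((ℕ → A) × (ℕ → A))).map (Prod.map shift shift) = ζ₂)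
    {a b : ℝ≥0∞} (ha : 0 < a) (hb : 0 < b) (hab : a + b = 1)
    (heq : a • (ζ₁ : Measure ((ℕ → A) × (ℕ → A))) + b • (ζ₂ : Measure ((ℕ → A) × (ℕ → A))) = ξ) :
    ζ₁ ∈ joiningsOver X ν := by
  have hF : MeasurableSet (Prod.fst ⁻¹' X : Set ((ℕ → A) × (ℕ → A))) :=
    measurable_fst hX.measurableSet
  have hinv : ∀ ζ : ProbabilityMeasure ((ℕ → A) × (ℕ → A)),
      (ζ : Measure ((ℕ → A) × (ℕ → A))).map (Prod.map shift shift) = ζ →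
      MeasurePreserving shift ((ζ : Measure ((ℕ → A) × (ℕ → A))).map Prod.snd)
        ((ζ : Measure ((ℕ → A) × (ℕ → A))).map Prod.snd) ∧
      IsProbabilityMeasure ((ζ : Measure ((ℕ → A) × (ℕ → A))).map Prod.snd) := by
    intro ζ h
    refine ⟨⟨measurable_shift, ?_⟩, Measure.isProbabilityMeasure_map measurable_snd.aemeasurable⟩
    conv_rhs => rw [← h, Measure.map_map measurable_snd measurable_prodShift]
    rw [Measure.map_map measurable_shift measurable_snd]
    rfl
  refine ⟨h₁, ?_, ?_⟩
  · refine (mem_extremePoints_iff_left.1 hν.mem_extremePoints).2 _ (hinv ζ₁ h₁) _ (hinv ζ₂ h₂)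
      ⟨a, b, ha, hb, hab, ?_⟩
    rw [← hξ.2.1, ← heq, Measure.map_add _ _ measurable_snd, Measure.map_smul, Measure.map_smul]
  · rw [← prob_compl_eq_zero_iff hF]
    have h0 := (prob_compl_eq_zero_iff hF).2 hξ.2.2
    rw [← heq] at h0
    simp only [Measure.add_apply, Measure.smul_apply, smul_eq_mul, add_eq_zero, mul_eq_zero] at h0
    exact h0.1.resolve_left ha.ne'

lemma exists_ergodic_mem_joiningsOver {X : Set (ℕ → A)} (hX : IsClosed X)
    {ν : ProbabilityMeasure (ℕ → A)} (hν : ErgodicPM ν)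
    {ξ₀ : ProbabilityMeasure ((ℕ → A) × (ℕ → A))} (h₀ : ξ₀ ∈ joiningsOver X ν) :
    ∃ ξ ∈ joiningsOver X ν,
      Ergodic (Prod.map shift shift) (ξ : Measure ((ℕ → A) × (ℕ → A))) ∧
      (ξ : Measure ((ℕ → A) × (ℕ → A))).real {p | p.1 0 ≠ p.2 0} ≤
        (ξ₀ : Measure ((ℕ → A) × (ℕ → A))).real {p | p.1 0 ≠ p.2 0} := by
  set c : ProbabilityMeasure ((ℕ → A) × (ℕ → A)) → ℝ := fun ξ =>
    (ξ : Measure ((ℕ → A) × (ℕ → A))).real {p | p.1 0 ≠ p.2 0} with hc_def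
  have hc : Continuous c := continuous_real_of_isClopen isClopen_ne_zero
  have hK : IsClosed (joiningsOver X ν) := isClosed_joiningsOver hX ν
  obtain ⟨ξm, hξm, hmin⟩ := hK.isCompact.exists_isMinOn ⟨ξ₀, h₀⟩ hc.continuousOn
  have hmin' : ∀ ζ ∈ joiningsOver X ν, c ξm ≤ c ζ := fun ζ hζ => hmin hζ
  set K₁ := joiningsOver X ν ∩ {ξ | c ξ = c ξm} with hK₁_def
  have hK₁ : IsCompact K₁ := (hK.inter (isClosed_eq hc continuous_const)).isCompact
  set e : ProbabilityMeasure ((ℕ → A) × (ℕ → A)) →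
      ((Σ k, Fin k → A) × (Σ k, Fin k → A)) → ℝ := fun ξ q =>
    (ξ : Measure ((ℕ → A) × (ℕ → A))).real (cylRect q) with he_def
  have he : Continuous e :=
    continuous_pi fun q => continuous_real_of_isClopen (isClopen_cylRect q)
  obtain ⟨y, hy⟩ := (hK₁.image he).extremePoints_nonempty ⟨_, ξm, ⟨hξm, rfl⟩, rfl⟩
  obtain ⟨hyK, hyext⟩ := mem_extremePoints_iff_left.1 hy
  obtain ⟨ξ, ⟨hξ, hξc⟩, rfl⟩ := hyK
  refine ⟨ξ, hξ, ?_, le_of_eq_of_le hξc (hmin' ξ₀ h₀)⟩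
  refine Ergodic.of_mem_extremePoints (mem_extremePoints_iff_left.2
    ⟨⟨⟨measurable_prodShift, hξ.1⟩, inferInstance⟩, ?_⟩)
  rintro m₁ ⟨hm₁, hp₁⟩ m₂ ⟨hm₂, hp₂⟩ ⟨a, b, ha, hb, hab, heq⟩
  set ζ₁ : ProbabilityMeasure ((ℕ → A) × (ℕ → A)) := ⟨m₁, hp₁⟩
  set ζ₂ : ProbabilityMeasure ((ℕ → A) × (ℕ → A)) := ⟨m₂, hp₂⟩
  have hζ₁ : ζ₁ ∈ joiningsOver X ν :=
    mem_joiningsOver_of_smul_add (ζ₁ := ζ₁) (ζ₂ := ζ₂) hX hν hξ hm₁.map_eq hm₂.map_eq ha hb hab heq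
  have hζ₂ : ζ₂ ∈ joiningsOver X ν :=
    mem_joiningsOver_of_smul_add (ζ₁ := ζ₂) (ζ₂ := ζ₁) hX hν hξ hm₂.map_eq hm₁.map_eq hb ha
      (by rwa [add_comm]) (by rwa [add_comm])
  have ha_top : a ≠ ∞ := ne_top_of_le_ne_top ENNReal.one_ne_top (hab ▸ le_self_add)
  have hb_top : b ≠ ∞ := ne_top_of_le_ne_top ENNReal.one_ne_top (hab ▸ le_add_self)
  have ha' : 0 < a.toReal := ENNReal.toReal_pos ha.ne' ha_top
  have hb' : 0 < b.toReal := ENNReal.toReal_pos hb.ne' hb_top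
  have hab' : a.toReal + b.toReal = 1 := by
    rw [← ENNReal.toReal_add ha_top hb_top, hab, ENNReal.toReal_one]
  have hreal : ∀ s, (ξ : Measure ((ℕ → A) × (ℕ → A))).real s =
      a.toReal * m₁.real s + b.toReal * m₂.real s := by
    intro s
    rw [← heq]
    simp only [measureReal_def, Measure.add_apply, Measure.smul_apply, smul_eq_mul]
    rw [ENNReal.toReal_add (ENNReal.mul_ne_top ha_top (measure_ne_top _ _))
      (ENNReal.mul_ne_top hb_top (measure_ne_top _ _)), ENNReal.toReal_mul, ENNReal.toReal_mul]
  have hcξ : c ξ = a.toReal * c ζ₁ + b.toReal * c ζ₂ := hreal _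
  have hc₁ := hmin' ζ₁ hζ₁
  have hc₂ := hmin' ζ₂ hζ₂
  have hsum : a.toReal * (c ζ₁ - c ξm) + b.toReal * (c ζ₂ - c ξm) = 0 := by
    have : c ξ = c ξm := hξc
    linear_combination this - hcξ - c ξm * hab'
  have hz₁ : 0 ≤ a.toReal * (c ζ₁ - c ξm) := mul_nonneg ha'.le (sub_nonneg.2 hc₁)
  have hz₂ : 0 ≤ b.toReal * (c ζ₂ - c ξm) := mul_nonneg hb'.le (sub_nonneg.2 hc₂)
  have hmem₁ : ζ₁ ∈ K₁ := ⟨hζ₁, by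
    have : a.toReal * (c ζ₁ - c ξm) = 0 := by linarith
    exact sub_eq_zero.1 ((mul_eq_zero.1 this).resolve_left ha'.ne')⟩
  have hmem₂ : ζ₂ ∈ K₁ := ⟨hζ₂, by
    have : b.toReal * (c ζ₂ - c ξm) = 0 := by linarith
    exact sub_eq_zero.1 ((mul_eq_zero.1 this).resolve_left hb'.ne')⟩
  have hext := hyext (e ζ₁) ⟨ζ₁, hmem₁, rfl⟩ (e ζ₂) ⟨ζ₂, hmem₂, rfl⟩
    ⟨a.toReal, b.toReal, ha', hb', hab', funext fun q => (hreal (cylRect q)).symm⟩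
  exact congrArg Subtype.val (eq_of_cylRect fun q => congrFun hext q)

end Extreme

lemma isJoining_prod {μ ν : ProbabilityMeasure (ℕ → A)} (hμ : invariantPM μ)
    (hν : invariantPM ν) : IsJoining ((μ : Measure (ℕ → A)).prod (ν : Measure (ℕ → A))) μ ν := by
  have hμs : SFinite (μ : Measure (ℕ → A)) := sfinite_probabilityMeasure μ
  have hνs : SFinite (ν : Measure (ℕ → A)) := sfinite_probabilityMeasure ν
  refine ⟨?_, measurePreserving_fst.map_eq, measurePreserving_snd.map_eq⟩
  rw [← Measure.map_prod_map _ _ measurable_shift measurable_shift, hμ, hν]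

lemma mem_Msigma_iff {X : Set (ℕ → A)} {μ : ProbabilityMeasure (ℕ → A)} :
    μ ∈ Msigma X ↔ invariantPM μ ∧ (μ : Measure (ℕ → A)) X = 1 := by
  rw [Msigma, Set.mem_ofPred_eq, ← ProbabilityMeasure.ennreal_coeFn_eq_coeFn_toMeasure,
    ENNReal.coe_eq_one]

lemma exists_ergodic_joining {X : Set (ℕ → A)} (hX : IsClosed X)
    {μ ν : ProbabilityMeasure (ℕ → A)} (hμ : μ ∈ Msigma X) (hν : ErgodicPM ν) {ε : ℝ}
    (hε : dbarM μ ν < ε) :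
    ∃ μ' ∈ Msigma X, ErgodicPM μ' ∧ ∃ ξ, IsJoining ξ μ' ν ∧ ξ.real {p | p.1 0 ≠ p.2 0} < ε := by
  have hne : {r : ℝ | ∃ ξ : Measure ((ℕ → A) × (ℕ → A)),
      IsJoining ξ μ ν ∧ r = (ξ {p | p.1 0 ≠ p.2 0}).toReal}.Nonempty := by
    exact ⟨_, _, isJoining_prod hμ.1 hν.map_eq, rfl⟩
  obtain ⟨_, ⟨ξ₀, h₀, rfl⟩, hlt⟩ := exists_lt_of_csInf_lt hne hε
  have hp := h₀.isProbabilityMeasure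
  have hmeas := hX.measurableSet
  have hmem : (⟨ξ₀, hp⟩ : ProbabilityMeasure _) ∈ joiningsOver X ν := by
    refine ⟨h₀.1, h₀.2.2, ?_⟩
    change ξ₀ (Prod.fst ⁻¹' X) = 1
    rw [← Measure.map_apply measurable_fst hmeas, h₀.2.1]
    exact (mem_Msigma_iff.1 hμ).2
  obtain ⟨ξ, hξ, herg, hle⟩ := exists_ergodic_mem_joiningsOver hX hν hmem
  set μ' : ProbabilityMeasure (ℕ → A) := ξ.map measurable_fst.aemeasurable
  have herg' : ErgodicPM μ' :=
    MeasurePreserving.ergodic_of_ergodic_semiconj (g := Prod.fst) ⟨measurable_fst, rfl⟩ herg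
      measurable_shift fun _ => rfl
  refine ⟨μ', mem_Msigma_iff.2 ⟨herg'.map_eq, ?_⟩, herg', ξ, ⟨hξ.1, rfl, hξ.2.1⟩,
    hle.trans_lt hlt⟩
  exact (Measure.map_apply measurable_fst hmeas).trans hξ.2.2

lemma frequently_abs_blockEntropy_sub_lt (μ : ProbabilityMeasure (ℕ → A)) {ε : ℝ} (hε : 0 < ε) :
    ∃ᶠ n : ℕ in atTop, |blockEntropy μ n / n - ksEntropy μ| < ε := by
  have h1 : ∃ᶠ n : ℕ in atTop, ksEntropy μ - ε < blockEntropy μ n / n :=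
    frequently_lt_of_lt_limsup (isCoboundedUnder_blockEntropy μ) (sub_lt_self _ hε)
  have h2 : ∀ᶠ n : ℕ in atTop, blockEntropy μ n / n < ksEntropy μ + ε :=
    eventually_lt_of_limsup_lt (lt_add_of_pos_right _ hε) (isBoundedUnder_blockEntropy μ)
  refine (h1.and_eventually h2).mono fun n hn => ?_
  rw [abs_lt]
  constructor <;> linarith [hn.1, hn.2]

lemma eventually_div_lt (K : ℕ) {δ : ℝ} (hδ : 0 < δ) : ∀ᶠ n : ℕ in atTop, (K : ℝ) / n < δ :=
  (tendsto_const_div_atTop_nhds_zero_nat (K : ℝ)).eventually (gt_mem_nhds hδ)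

lemma DbarMStable.entropyDense {X : Set (ℕ → A)} (hX : IsClosed X) (hstab : DbarMStable X) :
    EntropyDense X := by
  intro μ hμ U hU hμU ε hε
  obtain ⟨K, δ, hδ, hKU⟩ := exists_cyl_nhd hU hμU
  obtain ⟨η, hη, hent⟩ := exists_abs_ksEntropy_sub_lt A (half_pos hε)
  have hθ : 0 < min η (δ / (2 * (K + 1))) := lt_min hη (by positivity)
  obtain ⟨W, hW, hXW, hstabW⟩ := hstab _ hθ
  obtain ⟨K', δ', hδ', hKW⟩ := exists_cyl_nhd hW (hXW hμ)
  obtain ⟨n, hnent, hnK, hnK', hn⟩ := ((frequently_abs_blockEntropy_sub_lt μ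
    (half_pos hε)).and_eventually ((eventually_div_lt K (half_pos hδ)).and
      ((eventually_div_lt K' hδ').and (eventually_gt_atTop 0)))).exists
  have : NeZero n := ⟨hn.ne'⟩
  have hn0 : (0 : ℝ) < n := by exact_mod_cast hn
  set ν : ProbabilityMeasure (ℕ → A) := blockApprox (μ : Measure (ℕ → A)) n
  have hνW : ν ∈ W := hKW ν fun k hk w =>
    ((blockApprox_cyl_sub_le hμ.1 w).trans (by gcongr)).trans_lt hnK'
  obtain ⟨μ₁, hμ₁, hd⟩ := hstabW ν hνW (blockApprox_invariant _)
  obtain ⟨μ', hμ', herg, ξ, hξ, hcost⟩ :=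
    exists_ergodic_joining hX hμ₁ (blockApprox_ergodic (μ : Measure (ℕ → A))) hd
  refine ⟨μ', hμ', hKU μ' fun k hk w => ?_, herg, ?_⟩
  · have hkK : (k : ℝ) ≤ K := by exact_mod_cast hk
    have h1 := hξ.abs_cyl_sub_le w
    have h2 : |(ν : Measure (ℕ → A)).real (cyl w) - (μ : Measure (ℕ → A)).real (cyl w)| < δ / 2 :=
      ((blockApprox_cyl_sub_le hμ.1 w).trans (by gcongr)).trans_lt hnK
    have h3 : (k : ℝ) * ξ.real {p | p.1 0 ≠ p.2 0} ≤ δ / 2 := by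
      calc (k : ℝ) * ξ.real {p | p.1 0 ≠ p.2 0} ≤ (K + 1) * (δ / (2 * (K + 1))) := by
            gcongr
            · linarith
            · exact (hcost.trans_le (min_le_right _ _)).le
        _ = δ / 2 := by field_simp
    exact (abs_sub_le _ _ _).trans_lt (by linarith)
  · have h1 := hent ξ μ' ν hξ (hcost.trans_le (min_le_left _ _))
    have h2 : ksEntropy ν = blockEntropy μ n / n := by
      rw [blockEntropy_eq]
      exact ksEntropy_blockApprox _
    rw [← h2] at hnent
    exact (abs_sub_le _ _ _).trans_lt (by linarith)

lemma ofFn_eq_map_range' (x : ℕ → A) (i n : ℕ) :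
    List.ofFn (fun k : Fin n => x (i + k)) = (List.range' i n).map x :=
  List.ext_getElem (by simp) (by simp)

lemma iterate_mem_cyl_iff (w : List A) (x : ℕ → A) (i : ℕ) :
    shift^[i] x ∈ cyl w.get ↔ w = (List.range' i w.length).map x := by
  constructor
  · intro h
    refine List.ext_getElem (by simp) fun k hk _ => ?_
    have := h ⟨k, hk⟩
    simp only [shift_iterate_apply, List.get_eq_getElem] at this
    simp [← this]
  · intro h k
    rw [shift_iterate_apply, List.get_eq_getElem, List.getElem_of_eq h]
    simp

lemma occursIn_iff {w : List A} {x : ℕ → A} :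
    occursIn w x ↔ ∃ i, shift^[i] x ∈ cyl w.get := by
  simp only [iterate_mem_cyl_iff, occursIn, ofFn_eq_map_range']

lemma setOf_occursIn (w : List A) :
    {x : ℕ → A | occursIn w x} = ⋃ i, shift^[i] ⁻¹' cyl w.get := by
  ext x
  simp [occursIn_iff]

lemma isOpen_setOf_occursIn (w : List A) : IsOpen {x : ℕ → A | occursIn w x} := by
  rw [setOf_occursIn]
  exact isOpen_iUnion fun i => (isClopen_cyl _).isOpen.preimage (continuous_shift.iterate i)

lemma measure_setOf_occursIn_eq_zero {μ : ProbabilityMeasure (ℕ → A)} (hμ : invariantPM μ)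
    {w : List A} (h : (μ : Measure (ℕ → A)) (cyl w.get) = 0) :
    (μ : Measure (ℕ → A)) {x | occursIn w x} = 0 := by
  rw [setOf_occursIn]
  refine measure_iUnion_null fun i => ?_
  rw [((MeasurePreserving.mk measurable_shift hμ).iterate i).measure_preimage
    (measurableSet_cyl _).nullMeasurableSet, h]

lemma occursIn_of_occursIn_shift {w : List A} {x : ℕ → A} (h : occursIn w (shift x)) :
    occursIn w x := by
  obtain ⟨i, hi⟩ := occursIn_iff.1 h
  exact occursIn_iff.2 ⟨i + 1, hi⟩

lemma ShiftSpace.iterate_mem {X : Set (ℕ → A)} (hX : ShiftSpace X) {x : ℕ → A} (hx : x ∈ X)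
    (i : ℕ) : shift^[i] x ∈ X := by
  induction i with
  | zero => exact hx
  | succ i ih =>
    rw [Function.iterate_succ_apply']
    exact hX.2.2 _ ih

lemma exists_append_mem_lang {X : Set (ℕ → A)} {x : ℕ → A} (hx : x ∈ X) {u w : List A}
    (hu : x ∈ cyl u.get) (hw : occursIn w (shift^[u.length] x)) :
    ∃ v : List A, u ++ v ++ w ∈ lang X := by
  obtain ⟨j, hj⟩ := occursIn_iff.1 hw
  rw [← Function.iterate_add_apply, iterate_mem_cyl_iff] at hj
  have hu' := (iterate_mem_cyl_iff u x 0).1 hu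
  refine ⟨(List.range' u.length j).map x, x, hx, 0, ?_⟩
  rw [ofFn_eq_map_range']
  conv_lhs => rw [hj, hu']
  have h0 := List.range'_append_1 (s := 0) (m := u.length) (n := j)
  rw [zero_add] at h0
  have h1 := List.range'_append_1 (s := 0) (m := u.length + j) (n := w.length)
  rw [zero_add, add_comm u.length j] at h1
  simp only [List.length_map, List.length_range', List.length_append, ← List.map_append]
  rw [h0, add_comm u.length j, h1]

lemma IsMeasureCenter.exists_not_occursIn {X C : Set (ℕ → A)} (hC : IsMeasureCenter X C)
    {w : List A} (hw : w ∈ lang C) {y : ℕ → A} (hy : y ∈ C) (hwy : ¬ occursIn w y) :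
    ∃ μ ∈ Msigma X, (μ : Measure (ℕ → A)) (cyl w.get) ≠ 0 := by
  obtain ⟨hCs, hCX, hCμ, hmin⟩ := hC
  by_contra! hcon
  obtain ⟨x, hx, hwx⟩ := hw
  refine (hmin (C \ {x | occursIn w x}) ⟨⟨y, hy, hwy⟩, ?_, ?_⟩ (Set.sdiff_subset.trans hCX) ?_
    hx).2 hwx
  · exact hCs.2.1.sdiff (isOpen_setOf_occursIn w)
  · exact fun z hz => ⟨hCs.2.2 z hz.1, fun h => hz.2 (occursIn_of_occursIn_shift h)⟩
  · intro μ hμ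
    have h0 := measure_setOf_occursIn_eq_zero hμ.1 (hcon μ hμ)
    have h1 : (μ : Measure (ℕ → A)) C = 1 := (mem_Msigma_iff.1 ⟨hμ.1, hCμ μ hμ⟩).2
    exact (mem_Msigma_iff.2 ⟨hμ.1, (measure_sdiff_null h0).trans h1⟩).2

lemma IsMeasureCenter.exists_measure_cyl_ne_zero {X C : Set (ℕ → A)} (hC : IsMeasureCenter X C)
    (hne : (Msigma X).Nonempty) {w : List A} (hw : w ∈ lang C) :
    ∃ μ ∈ Msigma X, (μ : Measure (ℕ → A)) (cyl w.get) ≠ 0 := by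
  by_cases h : ∃ y ∈ C, ¬ occursIn w y
  · obtain ⟨y, hy, hwy⟩ := h
    exact hC.exists_not_occursIn hw hy hwy
  · push Not at h
    obtain ⟨μ, hμ⟩ := hne
    refine ⟨μ, hμ, fun h0 => ?_⟩
    have hnull := measure_setOf_occursIn_eq_zero hμ.1 h0
    have h1 : (μ : Measure (ℕ → A)) C = 1 := (mem_Msigma_iff.1 ⟨hμ.1, hC.2.2.1 μ hμ⟩).2
    exact one_ne_zero (h1.symm.trans (measure_mono_null h hnull))

lemma exists_mem_Msigma_add {X : Set (ℕ → A)} {μ₁ μ₂ : ProbabilityMeasure (ℕ → A)}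
    (h₁ : μ₁ ∈ Msigma X) (h₂ : μ₂ ∈ Msigma X) :
    ∃ μ ∈ Msigma X, (μ₁ : Measure (ℕ → A)) ≪ (μ : Measure (ℕ → A)) ∧
      (μ₂ : Measure (ℕ → A)) ≪ (μ : Measure (ℕ → A)) := by
  set m : Measure (ℕ → A) := (2 : ENNReal)⁻¹ • ((μ₁ : Measure (ℕ → A)) + (μ₂ : Measure (ℕ → A)))
    with hm
  have hone : ∀ s, (μ₁ : Measure (ℕ → A)) s = 1 → (μ₂ : Measure (ℕ → A)) s = 1 → m s = 1 := by
    intro s hs₁ hs₂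
    rw [hm, Measure.smul_apply, Measure.add_apply, hs₁, hs₂, one_add_one_eq_two, smul_eq_mul,
      ENNReal.inv_mul_cancel two_ne_zero ENNReal.ofNat_ne_top]
  have hle : (μ₁ : Measure (ℕ → A)) + (μ₂ : Measure (ℕ → A)) ≪ m :=
    Measure.absolutelyContinuous_smul (ENNReal.inv_ne_zero.2 ENNReal.ofNat_ne_top)
  refine ⟨⟨m, ⟨hone _ measure_univ measure_univ⟩⟩, mem_Msigma_iff.2 ⟨?_,
    hone X (mem_Msigma_iff.1 h₁).2 (mem_Msigma_iff.1 h₂).2⟩, ?_, ?_⟩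
  · change m.map shift = m
    rw [hm, Measure.map_smul, Measure.map_add _ _ measurable_shift, h₁.1, h₂.1]
  · exact (Measure.le_add_right le_rfl).absolutelyContinuous.trans hle
  · exact (Measure.le_add_left le_rfl).absolutelyContinuous.trans hle

lemma isOpen_setOf_measure_cyl_ne_zero {k : ℕ} (w : Fin k → A) :
    IsOpen {ν : ProbabilityMeasure (ℕ → A) | (ν : Measure (ℕ → A)) (cyl w) ≠ 0} := by
  convert isOpen_ne_fun (continuous_real_of_isClopen (isClopen_cyl w)) (continuous_const
    (y := (0 : ℝ))) using 1
  ext ν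
  exact (measureReal_ne_zero_iff (measure_ne_top _ _)).symm

lemma EntropyDense.transitiveShift {X C : Set (ℕ → A)} (hX : EntropyDense X)
    (hC : IsMeasureCenter X C) : TransitiveShift C := by
  intro u hu w hw
  by_cases hall : ∀ y ∈ C, occursIn w y
  · obtain ⟨x, hx, hux⟩ := hu
    obtain ⟨i, hi⟩ := occursIn_iff.1 hux
    have hxi := hC.1.iterate_mem hx i
    exact exists_append_mem_lang hxi hi (hall _ (hC.1.iterate_mem hxi _))
  push Not at hall
  obtain ⟨y, hy, hwy⟩ := hall
  obtain ⟨μ₂, hμ₂, hμ₂w⟩ := hC.exists_not_occursIn hw hy hwy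
  obtain ⟨μ₁, hμ₁, hμ₁u⟩ := hC.exists_measure_cyl_ne_zero ⟨μ₂, hμ₂⟩ hu
  obtain ⟨μ, hμ, hac₁, hac₂⟩ := exists_mem_Msigma_add hμ₁ hμ₂
  obtain ⟨ν, hν, ⟨hνu, hνw⟩, herg, -⟩ := hX μ hμ _
    ((isOpen_setOf_measure_cyl_ne_zero u.get).inter (isOpen_setOf_measure_cyl_ne_zero w.get))
    ⟨fun h => hμ₁u (hac₁ h), fun h => hμ₂w (hac₂ h)⟩ 1 one_pos
  have hocc : ∀ᵐ x ∂(ν : Measure (ℕ → A)), occursIn w x := by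
    rcases herg.ae_empty_or_univ_of_preimage_ae_le
      (isOpen_setOf_occursIn w).measurableSet.nullMeasurableSet
      (ae_of_all _ fun x hx => occursIn_of_occursIn_shift hx) with h | h
    · refine absurd (measure_mono_null (fun x hx => ?_) (ae_eq_empty.1 h)) hνw
      exact occursIn_iff.2 ⟨0, hx⟩
    · exact eventuallyEq_univ.1 h
  have hocc' : ∀ᵐ x ∂(ν : Measure (ℕ → A)), occursIn w (shift^[u.length] x) :=
    (herg.toMeasurePreserving.iterate u.length).quasiMeasurePreserving.ae hocc
  have hCν : ∀ᵐ x ∂(ν : Measure (ℕ → A)), x ∈ C :=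
    (prob_compl_eq_zero_iff hC.1.2.1.measurableSet).2
      (mem_Msigma_iff.1 ⟨hν.1, hC.2.2.1 ν hν⟩).2
  obtain ⟨x, hxu, hxw, hxC⟩ :=
    ((frequently_ae_mem_iff.2 hνu).and_eventually (hocc'.and hCν)).exists
  exact exists_append_mem_lang hxC hxu hxw

/-- if `X` is `d̄_M`-stable then its measure center is transitive and the
ergodic measures are entropy dense in `M_σ(X)`. -/
theorem statement6 (hA : 2 ≤ Fintype.card A) (X C : Set (ℕ → A)) (hX : ShiftSpace X)
    (hstab : DbarMStable X) (hC : IsMeasureCenter X C) :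
    TransitiveShift C ∧ EntropyDense X := by
  have hdense := hstab.entropyDense hX.2.1
  exact ⟨hdense.transitiveShift hC, hdense⟩

end DbarPaper
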